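/- arXiv:1907.01240 — 5 statements merged into one kernel-verified Lean document; each statement's English description precedes it below -/
import Mathlib

section
/- For every one-clock TBPP ℬ and nonterminals S, A, B of ℬ, the coverability relation {(u, v₁, v₂) ∈ ℝ≥0³ : {(S,u)} ↝cover {(A,v₁), (B,v₂)}} is definable in existential linear arithmetic. -/
/-!
Processes never interact except through the common passage of time, and none is ever forced to
move. Hence `{(A, v₁), (B, v₂)}` is coverable from `{(S, u)}` iff some branch of the run tree leads
from `(S, u)` to a rule application two of whose children lead, along single branches of equal
duration, to `(A, v₁)` and `(B, v₂)` (`cover_iff`). It remains to see that reachability along one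
branch is definable as a ternary relation of the initial clock value, the duration and the final
clock value (`def3_path`).

Without resets, reachability depends only on the regions of the two clock values and on their order
(`NoReset.of_regM`), and there are finitely many regions. A branch with resets splits at its first
and its last reset (`path_iff`); in between it is a walk in the finite graph whose vertices are the
pairs of a nonterminal and a reset constant, and only its duration matters. The possible durations
of an edge form a union of points `{n}` and open intervals `(n, n + 1)`, and such unions are stable
under sums (`Reg.exists_add`).

The durations of walks are definable for the following reason (`Def1.dur`). If a vertex lies on a
cycle of positive duration, then it lies on a closed walk whose duration is a positive natural
number `p`; the durations of the walks through this vertex are then stable under adding `p`, so they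
form finitely many arithmetic progressions of points and of unit intervals (`Def1.of_periodic`). In
any other walk all cycles have duration zero and can be removed, which leaves fewer edges than there
are vertices, and the durations of walks of bounded length are plainly definable.
-/

open scoped NNReal

namespace TBPPcore

/-- Comparison operators allowed in clock constraints. -/
inductive Cmp | lt | le | eq | ge | gt

/-- Satisfaction of a comparison between two nonnegative reals. -/
def Cmp.Sat : Cmp → ℝ≥0 → ℝ≥0 → Prop
  | .lt, a, b => a < b
  | .le, a, b => a ≤ b
  | .eq, a, b => a = b
  | .ge, a, b => a ≥ b
  | .gt, a, b => a > b

/-- An atomic clock constraint `x ⋈ k`. -/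
structure GuardAtom (C : Type) where
  clock : C
  cmp : Cmp
  bound : ℕ

/-- A clock valuation. -/
abbrev Val (C : Type) := C → ℝ≥0

/-- A guard is a (finite) conjunction of atomic clock constraints;
the empty list is the trivial constraint `true`. -/
def GuardSat {C : Type} (μ : Val C) (g : List (GuardAtom C)) : Prop :=
  ∀ a ∈ g, a.cmp.Sat (μ a.clock) (a.bound : ℝ≥0)

/-- An assignment `x := e` where `e` is a clock or a natural-number constant. -/
structure Assign (C : Type) where
  lhs : C
  rhs : C ⊕ ℕ

def applyAssign {C : Type} [DecidableEq C] (μ : Val C) (a : Assign C) : Val C :=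
  Function.update μ a.lhs (Sum.elim μ (fun k => (k : ℝ≥0)) a.rhs)

/-- Execute a sequence of assignments in order. -/
def applyUpdates {C : Type} [DecidableEq C] (μ : Val C) (U : List (Assign C)) : Val C :=
  U.foldl applyAssign μ

/-- A rule `A →(φ; U) α`. -/
structure Rule (C X : Type) where
  src : X
  guard : List (GuardAtom C)
  update : List (Assign C)
  rhs : Multiset X

/-- A timed basic parallel process: a finite set of rules whose right-hand
sides have size at most 2 (clocks `C` and nonterminals `X` are type
parameters; finiteness of the nonterminal set is imposed where needed). -/
structure TBPP (C X : Type) where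
  rules : Set (Rule C X)
  finite : rules.Finite
  small : ∀ r ∈ rules, Multiset.card r.rhs ≤ 2

/-- A configuration: a finite multiset of processes. -/
abbrev Config (C X : Type) := Multiset (X × Val C)

/-- Elapse `t` time units in every process of a configuration. -/
def shift {C X : Type} (t : ℝ≥0) (α : Config C X) : Config C X :=
  α.map (fun p => (p.1, fun c => p.2 c + t))

variable {C X : Type} [DecidableEq C]

/-- One transition: either a time elapse or a discrete rule application. -/
inductive Step (B : TBPP C X) : Config C X → ℝ≥0 → Config C X → Prop
  | elapse (α : Config C X) (t : ℝ≥0) : Step B α t (shift t α)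
  | discrete (β : Config C X) (r : Rule C X) (μ : Val C)
      (hr : r ∈ B.rules) (hg : GuardSat μ r.guard) :
      Step B (β + {(r.src, μ)}) 0
        (β + r.rhs.map (fun Y => (Y, applyUpdates μ r.update)))

/-- `Run B α t β`: a finite sequence of transitions from `α` to `β`
whose delays sum to `t`. -/
inductive Run (B : TBPP C X) : Config C X → ℝ≥0 → Config C X → Prop
  | refl (α : Config C X) : Run B α 0 α
  | tail {α β γ : Config C X} {t s : ℝ≥0} :
      Run B α t β → Step B β s γ → Run B α (t + s) γ

/-- `α →* β`. -/
def Reach (B : TBPP C X) (α β : Config C X) : Prop := ∃ t, Run B α t β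

/-- Coverability: `α ↝cover β`. -/
def Cover (B : TBPP C X) (α β : Config C X) : Prop :=
  ∃ γ, Reach B α γ ∧ β ≤ γ

/-- A timed automaton is a TBPP all of whose rules have right-hand side of size 1. -/
def IsTA (B : TBPP C X) : Prop := ∀ r ∈ B.rules, Multiset.card r.rhs = 1

/-- The valuation of a single clock. -/
def cval (u : ℝ≥0) : Val Unit := fun _ => u

end TBPPcore
namespace ELA

/-- Terms over the structure `(ℝ; 0, 1, +, ≤, ⌊·⌋)` with `n` free variables. -/
inductive Term (n : ℕ) : Type
  | var : Fin n → Term n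
  | zero : Term n
  | one : Term n
  | add : Term n → Term n → Term n
  | floor : Term n → Term n

noncomputable def Term.eval {n : ℕ} (v : Fin n → ℝ) : Term n → ℝ
  | .var i => v i
  | .zero => 0
  | .one => 1
  | .add s t => s.eval v + t.eval v
  | .floor t => (⌊t.eval v⌋ : ℝ)

/-- Existential formulas of linear arithmetic: literals `s ≤ t` and
`¬(s ≤ t)`, closed under `∧`, `∨` and existential quantification. -/
inductive Form : ℕ → Type
  | le {n : ℕ} : Term n → Term n → Form n
  | nle {n : ℕ} : Term n → Term n → Form n
  | and {n : ℕ} : Form n → Form n → Form n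
  | or {n : ℕ} : Form n → Form n → Form n
  | ex {n : ℕ} : Form (n + 1) → Form n

def Form.Sat : ∀ {n : ℕ}, Form n → (Fin n → ℝ) → Prop
  | _, .le s t, v => s.eval v ≤ t.eval v
  | _, .nle s t, v => ¬ s.eval v ≤ t.eval v
  | _, .and f g, v => f.Sat v ∧ g.Sat v
  | _, .or f g, v => f.Sat v ∨ g.Sat v
  | _, .ex f, v => ∃ r : ℝ, f.Sat (Fin.snoc v r)

/-- A set `S ⊆ ℝⁿ` is definable in existential linear arithmetic if it is the
set of realizations of an existential formula of linear arithmetic. -/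
def Definable (n : ℕ) (S : Set (Fin n → ℝ)) : Prop :=
  ∃ φ : Form n, S = {v | Form.Sat φ v}

end ELA
namespace ELA

/-! ### Definability over the nonnegative reals -/

/-- Weakening of a term by a fresh last variable. -/
def Term.lift {n : ℕ} : Term n → Term (n + 1)
  | .var i => .var i.castSucc
  | .zero => .zero
  | .one => .one
  | .add s t => .add s.lift t.lift
  | .floor t => .floor t.lift

theorem Term.eval_lift {n : ℕ} (t : Term n) (w : Fin (n + 1) → ℝ) :
    t.lift.eval w = t.eval (fun i => w i.castSucc) := by
  induction t <;> simp_all [Term.lift, Term.eval]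

/-- `f` is the restriction of a term to nonnegative arguments. -/
def TermFun {n : ℕ} (f : (Fin n → ℝ≥0) → ℝ≥0) : Prop :=
  ∃ t : Term n, ∀ v, t.eval (fun i => (v i : ℝ)) = f v

/-- `p` is the restriction of an existential formula to nonnegative arguments. -/
def PredDef {n : ℕ} (p : (Fin n → ℝ≥0) → Prop) : Prop :=
  ∃ φ : Form n, ∀ v, φ.Sat (fun i => (v i : ℝ)) ↔ p v

/-- A set of nonnegative reals is definable. Quantifying over all substituted terms builds closure
under substitution into the definition, so that no substitution on formulas is needed. -/
def Def1 (T : Set ℝ≥0) : Prop :=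
  ∀ (n : ℕ) (f : (Fin n → ℝ≥0) → ℝ≥0), TermFun f → PredDef fun v => f v ∈ T

/-- A binary relation on nonnegative reals is definable (closed under substitution of terms). -/
def Def2 (R : ℝ≥0 → ℝ≥0 → Prop) : Prop :=
  ∀ (n : ℕ) (f g : (Fin n → ℝ≥0) → ℝ≥0), TermFun f → TermFun g → PredDef fun v => R (f v) (g v)

/-- A ternary relation on nonnegative reals is definable (closed under substitution of terms). -/
def Def3 (R : ℝ≥0 → ℝ≥0 → ℝ≥0 → Prop) : Prop :=
  ∀ (n : ℕ) (f g h : (Fin n → ℝ≥0) → ℝ≥0), TermFun f → TermFun g → TermFun h →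
    PredDef fun v => R (f v) (g v) (h v)

variable {n : ℕ}

theorem TermFun.var (i : Fin n) : TermFun fun v => v i := ⟨.var i, fun _ => rfl⟩

theorem TermFun.add {f g : (Fin n → ℝ≥0) → ℝ≥0} (hf : TermFun f) (hg : TermFun g) :
    TermFun fun v => f v + g v := by
  obtain ⟨s, hs⟩ := hf
  obtain ⟨t, ht⟩ := hg
  exact ⟨.add s t, fun v => by simp [Term.eval, hs, ht]⟩

theorem TermFun.natCast (k : ℕ) : TermFun fun _ : Fin n → ℝ≥0 => (k : ℝ≥0) := by
  induction k with
  | zero => exact ⟨.zero, fun v => by simp [Term.eval]⟩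
  | succ k ih =>
    obtain ⟨t, ht⟩ := ih
    exact ⟨.add t .one, fun v => by simp [Term.eval, ht]⟩

theorem TermFun.natMul (k : ℕ) {f : (Fin n → ℝ≥0) → ℝ≥0} (hf : TermFun f) :
    TermFun fun v => (k : ℝ≥0) * f v := by
  induction k with
  | zero => simpa using TermFun.natCast (n := n) 0
  | succ k ih =>
    have := ih.add hf
    simpa [add_mul] using this

theorem TermFun.lift {f : (Fin n → ℝ≥0) → ℝ≥0} (hf : TermFun f) :
    TermFun fun w : Fin (n + 1) → ℝ≥0 => f (fun i => w i.castSucc) := by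
  obtain ⟨t, ht⟩ := hf
  exact ⟨t.lift, fun v => by rw [Term.eval_lift, ← ht]⟩

theorem PredDef.congr {p q : (Fin n → ℝ≥0) → Prop} (hp : PredDef p) (h : ∀ v, q v ↔ p v) :
    PredDef q := by
  obtain ⟨φ, hφ⟩ := hp
  exact ⟨φ, fun v => (hφ v).trans (h v).symm⟩

theorem PredDef.le {f g : (Fin n → ℝ≥0) → ℝ≥0} (hf : TermFun f) (hg : TermFun g) :
    PredDef fun v => f v ≤ g v := by
  obtain ⟨s, hs⟩ := hf
  obtain ⟨t, ht⟩ := hg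
  exact ⟨.le s t, fun v => by simp [Form.Sat, hs, ht]⟩

theorem PredDef.lt {f g : (Fin n → ℝ≥0) → ℝ≥0} (hf : TermFun f) (hg : TermFun g) :
    PredDef fun v => f v < g v := by
  obtain ⟨s, hs⟩ := hf
  obtain ⟨t, ht⟩ := hg
  exact ⟨.nle t s, fun v => by simp [Form.Sat, hs, ht]⟩

theorem PredDef.and {p q : (Fin n → ℝ≥0) → Prop} (hp : PredDef p) (hq : PredDef q) :
    PredDef fun v => p v ∧ q v := by
  obtain ⟨φ, hφ⟩ := hp
  obtain ⟨ψ, hψ⟩ := hq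
  exact ⟨.and φ ψ, fun v => by simp [Form.Sat, hφ, hψ]⟩

theorem PredDef.or {p q : (Fin n → ℝ≥0) → Prop} (hp : PredDef p) (hq : PredDef q) :
    PredDef fun v => p v ∨ q v := by
  obtain ⟨φ, hφ⟩ := hp
  obtain ⟨ψ, hψ⟩ := hq
  exact ⟨.or φ ψ, fun v => by simp [Form.Sat, hφ, hψ]⟩

theorem PredDef.eq {f g : (Fin n → ℝ≥0) → ℝ≥0} (hf : TermFun f) (hg : TermFun g) :
    PredDef fun v => f v = g v :=
  ((PredDef.le hf hg).and (PredDef.le hg hf)).congr fun _ => le_antisymm_iff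

theorem PredDef.const (P : Prop) : PredDef fun _ : Fin n → ℝ≥0 => P := by
  by_cases h : P
  · exact ⟨.le .zero .zero, fun v => by simp [Form.Sat, h]⟩
  · exact ⟨.nle .zero .zero, fun v => by simp [Form.Sat, h]⟩

theorem PredDef.not_le {f g : (Fin n → ℝ≥0) → ℝ≥0} (hf : TermFun f) (hg : TermFun g) :
    PredDef fun v => ¬ f v ≤ g v :=
  (PredDef.lt hg hf).congr fun _ => _root_.not_le

theorem PredDef.not_lt {f g : (Fin n → ℝ≥0) → ℝ≥0} (hf : TermFun f) (hg : TermFun g) :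
    PredDef fun v => ¬ f v < g v :=
  (PredDef.le hg hf).congr fun _ => _root_.not_lt

theorem PredDef.exists_mem_finset {ι : Type*} (s : Finset ι) {p : ι → (Fin n → ℝ≥0) → Prop}
    (h : ∀ i, PredDef (p i)) : PredDef fun v => ∃ i ∈ s, p i v := by
  classical
  induction s using Finset.induction_on with
  | empty => exact (PredDef.const False).congr fun v => by simp
  | insert a s _ ih => exact ((h a).or ih).congr fun v => by simp

theorem PredDef.exists_finite {ι : Type*} [Finite ι] {p : ι → (Fin n → ℝ≥0) → Prop}
    (h : ∀ i, PredDef (p i)) : PredDef fun v => ∃ i, p i v := by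
  have := Fintype.ofFinite ι
  exact (PredDef.exists_mem_finset Finset.univ h).congr fun v => by simp

theorem PredDef.forall_finite {ι : Type*} [Finite ι] {p : ι → (Fin n → ℝ≥0) → Prop}
    (h : ∀ i, PredDef (p i)) : PredDef fun v => ∀ i, p i v := by
  classical
  have := Fintype.ofFinite ι
  have key : ∀ s : Finset ι, PredDef fun v => ∀ i ∈ s, p i v := by
    intro s
    induction s using Finset.induction_on with
    | empty => exact (PredDef.const True).congr fun v => by simp
    | insert a s _ ih => exact ((h a).and ih).congr fun v => by simp
  exact (key Finset.univ).congr fun v => by simp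

theorem PredDef.ex {P : (Fin n → ℝ≥0) → ℝ≥0 → Prop}
    (h : PredDef fun w : Fin (n + 1) → ℝ≥0 => P (fun i => w i.castSucc) (w (Fin.last n))) :
    PredDef fun v => ∃ r, P v r := by
  obtain ⟨φ, hφ⟩ := h
  have snoc_coe : ∀ (v : Fin n → ℝ≥0) (r : ℝ≥0),
      (Fin.snoc (fun i => (v i : ℝ)) (r : ℝ) : Fin (n + 1) → ℝ)
        = fun i => (((Fin.snoc v r : Fin (n + 1) → ℝ≥0) i : ℝ≥0) : ℝ) := by
    intro v r
    funext i
    refine Fin.lastCases ?_ (fun j => ?_) i <;> simp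
  have sat_snoc : ∀ (v : Fin n → ℝ≥0) (r : ℝ≥0),
      φ.Sat (Fin.snoc (fun i => (v i : ℝ)) (r : ℝ)) ↔ P v r := by
    intro v r
    rw [snoc_coe, hφ]
    simp
  refine ⟨.ex (.and (.le .zero (.var (Fin.last n))) φ), fun v => ?_⟩
  simp only [Form.Sat, Term.eval, Fin.snoc_last]
  constructor
  · rintro ⟨r, hr, hs⟩
    exact ⟨⟨r, hr⟩, (sat_snoc v ⟨r, hr⟩).1 hs⟩
  · rintro ⟨r, hr⟩
    exact ⟨r, r.2, (sat_snoc v r).2 hr⟩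

theorem PredDef.isNat {f : (Fin n → ℝ≥0) → ℝ≥0} (hf : TermFun f) :
    PredDef fun v => ∃ k : ℕ, f v = k := by
  obtain ⟨t, ht⟩ := hf
  refine ⟨.le t (.floor t), fun v => ?_⟩
  simp only [Form.Sat, Term.eval, ht]
  constructor
  · intro h
    refine ⟨⌊f v⌋₊, le_antisymm ?_ (Nat.floor_le zero_le)⟩
    have h2 : ((⌊f v⌋₊ : ℕ) : ℤ) = ⌊(f v : ℝ)⌋ := by
      exact Int.natCast_floor_eq_floor (f v).2
    rw [← NNReal.coe_le_coe]
    calc (f v : ℝ) ≤ (⌊(f v : ℝ)⌋ : ℝ) := h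
      _ = (((⌊f v⌋₊ : ℕ) : ℤ) : ℝ) := by rw [h2]
      _ = _ := by simp
  · rintro ⟨k, hk⟩
    simp [hk]

theorem PredDef.exNat {P : (Fin n → ℝ≥0) → ℝ≥0 → Prop}
    (h : PredDef fun w : Fin (n + 1) → ℝ≥0 => P (fun i => w i.castSucc) (w (Fin.last n))) :
    PredDef fun v => ∃ k : ℕ, P v k := by
  have := PredDef.ex (P := fun v r => (∃ k : ℕ, r = k) ∧ P v r)
    ((PredDef.isNat (TermFun.var _)).and h)
  refine this.congr fun v => ⟨?_, ?_⟩
  · rintro ⟨k, hk⟩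
    exact ⟨k, ⟨k, rfl⟩, hk⟩
  · rintro ⟨_, ⟨k, rfl⟩, hk⟩
    exact ⟨k, hk⟩

theorem Def3.definable {R : ℝ≥0 → ℝ≥0 → ℝ≥0 → Prop} (h : Def3 R) :
    Definable 3 {w : Fin 3 → ℝ | ∃ u v₁ v₂ : ℝ≥0,
      w 0 = (u : ℝ) ∧ w 1 = (v₁ : ℝ) ∧ w 2 = (v₂ : ℝ) ∧ R u v₁ v₂} := by
  obtain ⟨φ, hφ⟩ := h 3 _ _ _ (TermFun.var 0) (TermFun.var 1) (TermFun.var 2)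
  refine ⟨.and (.le .zero (.var 0)) (.and (.le .zero (.var 1)) (.and (.le .zero (.var 2)) φ)), ?_⟩
  ext w
  simp only [Set.mem_ofPred_eq, Form.Sat, Term.eval]
  have coe_vec : ∀ u v₁ v₂ : ℝ≥0, w 0 = (u : ℝ) → w 1 = (v₁ : ℝ) → w 2 = (v₂ : ℝ) →
      w = fun i => ((![u, v₁, v₂] i : ℝ≥0) : ℝ) := by
    intro u v₁ v₂ h0 h1 h2
    funext i
    fin_cases i <;> simp [h0, h1, h2]
  constructor
  · rintro ⟨u, v₁, v₂, h0, h1, h2, hR⟩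
    refine ⟨h0 ▸ u.2, h1 ▸ v₁.2, h2 ▸ v₂.2, ?_⟩
    rw [coe_vec u v₁ v₂ h0 h1 h2, hφ]
    simpa using hR
  · rintro ⟨h0, h1, h2, hs⟩
    refine ⟨⟨w 0, h0⟩, ⟨w 1, h1⟩, ⟨w 2, h2⟩, rfl, rfl, rfl, ?_⟩
    rw [coe_vec ⟨w 0, h0⟩ ⟨w 1, h1⟩ ⟨w 2, h2⟩ rfl rfl rfl, hφ] at hs
    simpa using hs

/-! ### Regions -/

/-- `s` and `t` agree on all comparisons with naturals up to `M`: clock regions. -/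
def RegM (M : ℕ) (s t : ℝ≥0) : Prop :=
  ∀ k : ℕ, k ≤ M → ((s < k ↔ t < k) ∧ (s ≤ k ↔ t ≤ k))

/-- `s` and `t` agree on all comparisons with naturals: both equal the same natural, or both lie in
the same open unit interval. -/
def Reg (s t : ℝ≥0) : Prop := ∀ M, RegM M s t

theorem RegM.refl (M : ℕ) (s : ℝ≥0) : RegM M s s := fun _ _ => ⟨Iff.rfl, Iff.rfl⟩

theorem RegM.symm {M : ℕ} {s t : ℝ≥0} (h : RegM M s t) : RegM M t s :=
  fun k hk => ⟨(h k hk).1.symm, (h k hk).2.symm⟩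

theorem RegM.trans {M : ℕ} {s t r : ℝ≥0} (h : RegM M s t) (h' : RegM M t r) : RegM M s r :=
  fun k hk => ⟨(h k hk).1.trans (h' k hk).1, (h k hk).2.trans (h' k hk).2⟩

theorem Reg.lt_iff {s t : ℝ≥0} (h : Reg s t) (k : ℕ) : s < k ↔ t < k := (h k k le_rfl).1

theorem Reg.le_iff {s t : ℝ≥0} (h : Reg s t) (k : ℕ) : s ≤ k ↔ t ≤ k := (h k k le_rfl).2

/-- Regions are convex and linearly ordered: distinct regions are separated. -/
theorem RegM.le_of_not {M : ℕ} {s t s' t' : ℝ≥0} (hst : s ≤ t) (hn : ¬ RegM M s t)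
    (hs : RegM M s s') (ht : RegM M t t') : s' ≤ t' := by
  obtain ⟨k, hn⟩ := not_forall.1 hn
  obtain ⟨hk, hn⟩ := Classical.not_imp.1 hn
  -- Some natural `k ≤ M` separates `s` from `t`, hence also `s'` from `t'`.
  have h3 : (s < k ∧ ¬ t < k) ∨ (s ≤ k ∧ ¬ t ≤ k) := by
    by_contra hcon
    push Not at hcon
    have e1 : s < k ↔ t < k := ⟨hcon.1, hst.trans_lt⟩
    have e2 : s ≤ k ↔ t ≤ k := ⟨hcon.2, hst.trans⟩
    exact hn ⟨e1, e2⟩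
  rcases h3 with h3 | h3
  · rw [(hs k hk).1, (ht k hk).1] at h3
    exact h3.1.le.trans (not_lt.1 h3.2)
  · rw [(hs k hk).2, (ht k hk).2] at h3
    exact h3.1.trans (le_of_lt (not_le.1 h3.2))

theorem nat_or_between (t : ℝ≥0) : (∃ n : ℕ, t = n) ∨ ∃ n : ℕ, (n : ℝ≥0) < t ∧ t < n + 1 := by
  rcases (Nat.floor_le (zero_le (a := t))).eq_or_lt with h | h
  · exact Or.inl ⟨_, h.symm⟩
  · exact Or.inr ⟨_, h, Nat.lt_floor_add_one t⟩

theorem Reg.of_between {n : ℕ} {s t : ℝ≥0} (h1 : (n : ℝ≥0) < s) (h2 : s < n + 1)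
    (h3 : (n : ℝ≥0) < t) (h4 : t < n + 1) : Reg s t := by
  intro M k _
  rcases le_or_gt k n with hk | hk
  · have hk' : (k : ℝ≥0) ≤ n := by exact_mod_cast hk
    simp [not_lt.2 (hk'.trans h1.le), not_lt.2 (hk'.trans h3.le),
      not_le.2 (hk'.trans_lt h1), not_le.2 (hk'.trans_lt h3)]
  · have hk' : (n : ℝ≥0) + 1 ≤ k := by exact_mod_cast hk
    simp [h2.trans_le hk', h4.trans_le hk', (h2.trans_le hk').le, (h4.trans_le hk').le]

theorem Reg.add_nat_iff {s t : ℝ≥0} (n : ℕ) : Reg (n + s) (n + t) ↔ Reg s t := by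
  constructor
  · intro h M k _
    have h1 := h.lt_iff (n + k)
    have h2 := h.le_iff (n + k)
    push_cast at h1 h2
    exact ⟨by simpa using h1, by simpa using h2⟩
  · intro h M k _
    rcases lt_or_ge k n with hk | hk
    · have hk' : (k : ℝ≥0) < n := by exact_mod_cast hk
      have a : ∀ x : ℝ≥0, ¬ (n : ℝ≥0) + x ≤ k :=
        fun x => not_le.2 (hk'.trans_le le_self_add)
      have b : ∀ x : ℝ≥0, ¬ (n : ℝ≥0) + x < k := fun x hx => a x hx.le
      simp [a, b]
    · obtain ⟨l, rfl⟩ := Nat.exists_eq_add_of_le hk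
      have h1 := h.lt_iff l
      have h2 := h.le_iff l
      push_cast
      exact ⟨by simpa using h1, by simpa using h2⟩

/-- The region of a sum is contained in the sum of the regions. -/
theorem Reg.exists_add {a b t : ℝ≥0} (h : Reg (a + b) t) :
    ∃ a' b', Reg a a' ∧ Reg b b' ∧ a' + b' = t := by
  have of_nat : ∀ (n : ℕ) (b : ℝ≥0), Reg (n + b) t → ∃ b', Reg b b' ∧ n + b' = t := by
    intro n b h
    have hn : (n : ℝ≥0) ≤ t := by
      rw [← not_lt, ← h.lt_iff n, not_lt]
      exact le_self_add
    obtain ⟨b', rfl⟩ := exists_add_of_le hn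
    exact ⟨b', (Reg.add_nat_iff n).1 h, rfl⟩
  have rfl' : ∀ s, Reg s s := fun s M => RegM.refl M s
  rcases nat_or_between a with ⟨n, rfl⟩ | ⟨n, hn1, hn2⟩
  · obtain ⟨b', hb, e⟩ := of_nat n b h
    exact ⟨n, b', rfl' _, hb, e⟩
  rcases nat_or_between b with ⟨m, rfl⟩ | ⟨m, hm1, hm2⟩
  · rw [add_comm] at h
    obtain ⟨a', ha, e⟩ := of_nat m a h
    exact ⟨a', m, ha, rfl' _, by rw [add_comm, e]⟩
  have h1 : ((n + m : ℕ) : ℝ≥0) < t := by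
    rw [← not_le, ← h.le_iff, not_le]
    push_cast
    exact add_lt_add hn1 hm1
  have h2 : t < ((n + m + 2 : ℕ) : ℝ≥0) := by
    rw [← h.lt_iff]
    push_cast
    calc a + b < (n + 1) + (m + 1) := add_lt_add hn2 hm2
      _ = _ := by ring
  obtain ⟨e, rfl⟩ := exists_add_of_le h1.le
  have he0 : 0 < e := by
    simpa using h1
  have he2 : e < 2 := by
    push_cast at h2
    simpa using h2
  have hh : e / 2 < 1 := by
    rw [div_lt_one (by norm_num)]
    exact he2
  have hh0 : 0 < e / 2 := by positivity
  refine ⟨n + e / 2, m + e / 2, Reg.of_between hn1 hn2 ?_ ?_, Reg.of_between hm1 hm2 ?_ ?_, ?_⟩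
  · simpa using hh0
  · simpa using hh
  · simpa using hh0
  · simpa using hh
  · push_cast
    rw [← add_halves e]
    simp only [add_halves]
    nth_rewrite 3 [← add_halves e]
    ring

/-- A union of regions. -/
def RegInv (T : Set ℝ≥0) : Prop := ∀ s t, Reg s t → s ∈ T → t ∈ T

theorem Def2.of_regM (M : ℕ) {R : ℝ≥0 → ℝ≥0 → Prop}
    (h : ∀ u v u' v', RegM M u u' → RegM M v v' → R u v → R u' v') : Def2 R := by
  classical
  intro n f g hf hg
  -- The Boolean vector of all comparisons with naturals up to `M` takes finitely many values.
  let code : ℝ≥0 → Fin (M + 1) → Bool × Bool := fun u k =>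
    (decide (u < ((k : ℕ) : ℝ≥0)), decide (u ≤ ((k : ℕ) : ℝ≥0)))
  have code_eq : ∀ u v, code u = code v → RegM M u v := by
    intro u v huv k hk
    have := congrFun huv ⟨k, by omega⟩
    simpa [code] using this
  have code_def : ∀ (f : (Fin n → ℝ≥0) → ℝ≥0) (_ : TermFun f) (c : Fin (M + 1) → Bool × Bool),
      PredDef fun v => code (f v) = c := by
    intro f hf c
    have key : PredDef fun v => ∀ k : Fin (M + 1),
        decide (f v < ((k : ℕ) : ℝ≥0)) = (c k).1 ∧ decide (f v ≤ ((k : ℕ) : ℝ≥0)) = (c k).2 := by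
      refine PredDef.forall_finite fun k => PredDef.and ?_ ?_
      · cases (c k).1
        · exact (PredDef.not_lt hf (TermFun.natCast k)).congr fun v => by simp
        · exact (PredDef.lt hf (TermFun.natCast k)).congr fun v => by simp
      · cases (c k).2
        · exact (PredDef.not_le hf (TermFun.natCast k)).congr fun v => by simp
        · exact (PredDef.le hf (TermFun.natCast k)).congr fun v => by simp
    refine key.congr fun v => ?_
    rw [funext_iff]
    exact forall_congr' fun k => by simp [code, Prod.ext_iff]
  have key : PredDef fun v => ∃ c : (Fin (M + 1) → Bool × Bool) × (Fin (M + 1) → Bool × Bool),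
      (∃ u w, code u = c.1 ∧ code w = c.2 ∧ R u w) ∧ code (f v) = c.1 ∧ code (g v) = c.2 :=
    PredDef.exists_finite fun c =>
      (PredDef.const _).and ((code_def f hf c.1).and (code_def g hg c.2))
  refine key.congr fun v => ⟨fun hR => ⟨(code (f v), code (g v)), ⟨_, _, rfl, rfl, hR⟩, rfl, rfl⟩, ?_⟩
  rintro ⟨c, ⟨u, w, hu, hw, hR⟩, h1, h2⟩
  exact h _ _ _ _ (code_eq _ _ (hu.trans h1.symm)) (code_eq _ _ (hw.trans h2.symm)) hR

theorem Def1.of_regM (M : ℕ) {T : Set ℝ≥0}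
    (h : ∀ u u', RegM M u u' → u ∈ T → u' ∈ T) : Def1 T := by
  intro n f hf
  exact Def2.of_regM M (R := fun u _ => u ∈ T) (fun u _ u' _ hu _ => h u u' hu) n f f hf hf

theorem exists_finset_of_add_mem {S : Set ℕ} {p : ℕ} (hp : 0 < p) (hS : ∀ n ∈ S, n + p ∈ S) :
    ∃ F : Finset ℕ, ∀ n, n ∈ S ↔ ∃ a ∈ F, ∃ y : ℕ, n = a + p * y := by
  classical
  -- One least element of `S` for every residue class that `S` meets.
  let m : ℕ → ℕ := fun r => sInf {n | n ∈ S ∧ n % p = r}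
  refine ⟨((Finset.range p).image m).filter (· ∈ S), fun n => ⟨fun hn => ?_, ?_⟩⟩
  · have hne : {k | k ∈ S ∧ k % p = n % p}.Nonempty := ⟨n, hn, rfl⟩
    have hm : m (n % p) ∈ S ∧ m (n % p) % p = n % p := Nat.sInf_mem hne
    have hle : m (n % p) ≤ n := Nat.sInf_le ⟨hn, rfl⟩
    refine ⟨m (n % p), ?_, ?_⟩
    · simp only [Finset.mem_filter, Finset.mem_image, Finset.mem_range]
      exact ⟨⟨n % p, Nat.mod_lt _ hp, rfl⟩, hm.1⟩
    · obtain ⟨y, hy⟩ := (Nat.modEq_iff_dvd' hle).1 hm.2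
      exact ⟨y, by omega⟩
  · rintro ⟨a, ha, y, rfl⟩
    have haS := (Finset.mem_filter.1 ha).2
    clear ha
    induction y with
    | zero => simpa using haS
    | succ y ih =>
      have := hS _ ih
      rwa [add_assoc, ← Nat.mul_succ] at this

/-- A union of regions stable under translation by a positive natural is a finite union of
arithmetic progressions of points and of open unit intervals, hence definable. -/
theorem Def1.of_periodic {T : Set ℝ≥0} (hT : RegInv T) {p : ℕ} (hp : 0 < p)
    (hTp : ∀ t ∈ T, t + p ∈ T) : Def1 T := by
  obtain ⟨F, hF⟩ := exists_finset_of_add_mem (S := {n : ℕ | (n : ℝ≥0) ∈ T}) hp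
    (fun n hn => by simpa using hTp _ hn)
  obtain ⟨G, hG⟩ := exists_finset_of_add_mem (S := {n : ℕ | (n : ℝ≥0) + 1 / 2 ∈ T}) hp
    (fun n hn => by
      have := hTp _ hn
      simp only [Set.mem_ofPred_eq]
      push_cast
      rwa [add_right_comm])
  simp only [Set.mem_ofPred_eq] at hF hG
  have half : ∀ n : ℕ, (n : ℝ≥0) < n + 1 / 2 ∧ (n : ℝ≥0) + 1 / 2 < n + 1 := by
    intro n
    constructor
    · exact lt_add_of_pos_right _ (by norm_num)
    · exact (add_lt_add_iff_left _).2 (by rw [div_lt_one (by norm_num)]; norm_num)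
  intro n f hf
  have h1 : PredDef fun v => ∃ a ∈ F, ∃ y : ℕ, f v = a + p * (y : ℝ≥0) :=
    PredDef.exists_mem_finset F fun a => PredDef.exNat (P := fun v y => f v = a + p * y)
      (PredDef.eq hf.lift ((TermFun.natCast a).add ((TermFun.var _).natMul p)))
  have h2 : PredDef fun v => ∃ a ∈ G, ∃ y : ℕ,
      a + p * (y : ℝ≥0) < f v ∧ f v < a + p * (y : ℝ≥0) + (1 : ℕ) :=
    PredDef.exists_mem_finset G fun a => PredDef.exNat
      (P := fun v y => a + p * y < f v ∧ f v < a + p * y + (1 : ℕ))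
      ((PredDef.lt ((TermFun.natCast a).add ((TermFun.var _).natMul p)) hf.lift).and
        (PredDef.lt hf.lift
          (((TermFun.natCast a).add ((TermFun.var _).natMul p)).add (TermFun.natCast 1))))
  refine (h1.or h2).congr fun v => ⟨fun ht => ?_, ?_⟩
  · rcases nat_or_between (f v) with ⟨k, hk⟩ | ⟨k, hk1, hk2⟩
    · left
      obtain ⟨a, ha, y, e⟩ := (hF k).1 (hk ▸ ht)
      exact ⟨a, ha, y, by rw [hk, e]; push_cast; rfl⟩
    · right
      obtain ⟨a, ha, y, e⟩ := (hG k).1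
        (hT _ _ (Reg.of_between hk1 hk2 (half k).1 (half k).2) ht)
      have e' : (a : ℝ≥0) + p * y = k := by rw [e]; push_cast; rfl
      exact ⟨a, ha, y, by rw [e']; exact hk1, by rw [e']; simpa using hk2⟩
  · rintro (⟨a, ha, y, e⟩ | ⟨a, ha, y, e1, e2⟩)
    · have := (hF (a + p * y)).2 ⟨a, ha, y, rfl⟩
      rw [e]
      exact_mod_cast this
    · have := (hG (a + p * y)).2 ⟨a, ha, y, rfl⟩
      refine hT _ _ (Reg.of_between (half _).1 (half _).2 ?_ ?_) this
      · push_cast; exact e1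
      · push_cast; simpa using e2

end ELA

/-! ### Durations of walks in a finite graph -/

namespace ELA

section Walks

variable {ι : Type*}

/-- Total durations of the walks with `m` edges from `i` to `j`, when an edge from `i` to `j` may
last any time in `E i j`. -/
def Walk (E : ι → ι → Set ℝ≥0) : ℕ → ι → ι → Set ℝ≥0
  | 0, i, j => {t | i = j ∧ t = 0}
  | m + 1, i, j => {t | ∃ k a b, a ∈ E i k ∧ b ∈ Walk E m k j ∧ a + b = t}

/-- Total durations of all walks from `i` to `j`. -/
def Dur (E : ι → ι → Set ℝ≥0) (i j : ι) : Set ℝ≥0 := {t | ∃ m, t ∈ Walk E m i j}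

variable {E : ι → ι → Set ℝ≥0}

theorem Walk.append {m l : ℕ} {i k j : ι} {a b : ℝ≥0} (ha : a ∈ Walk E m i k)
    (hb : b ∈ Walk E l k j) : a + b ∈ Walk E (m + l) i j := by
  induction m generalizing i a with
  | zero =>
    obtain ⟨rfl, rfl⟩ := ha
    simpa using hb
  | succ m ih =>
    obtain ⟨k', x, y, hx, hy, rfl⟩ := ha
    rw [Nat.succ_add]
    exact ⟨k', x, y + b, hx, ih hy, (add_assoc _ _ _).symm⟩

theorem Dur.zero (i : ι) : 0 ∈ Dur E i i := ⟨0, rfl, rfl⟩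

theorem Dur.add {i k j : ι} {a b : ℝ≥0} (ha : a ∈ Dur E i k) (hb : b ∈ Dur E k j) :
    a + b ∈ Dur E i j := by
  obtain ⟨m, ha⟩ := ha
  obtain ⟨l, hb⟩ := hb
  exact ⟨_, Walk.append ha hb⟩

theorem Dur.edge {i j : ι} {a : ℝ≥0} (ha : a ∈ E i j) : a ∈ Dur E i j :=
  ⟨1, j, a, 0, ha, ⟨rfl, rfl⟩, add_zero a⟩

theorem Walk.regInv (hE : ∀ i j, RegInv (E i j)) (m : ℕ) (i j : ι) : RegInv (Walk E m i j) := by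
  induction m generalizing i with
  | zero =>
    rintro s t h ⟨rfl, rfl⟩
    have := (h.le_iff 0).1 (by simp)
    exact ⟨rfl, by simpa using this⟩
  | succ m ih =>
    rintro s t h ⟨k, a, b, ha, hb, rfl⟩
    obtain ⟨a', b', h1, h2, rfl⟩ := h.exists_add
    exact ⟨k, a', b', hE _ _ _ _ h1 ha, ih _ _ _ h2 hb, rfl⟩

theorem Dur.regInv (hE : ∀ i j, RegInv (E i j)) (i j : ι) : RegInv (Dur E i j) :=
  fun s t h ⟨m, hm⟩ => ⟨m, Walk.regInv hE m i j s t h hm⟩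

theorem Walk.exists_path {m : ℕ} {i j : ι} {t : ℝ≥0} (h : t ∈ Walk E m i j) :
    ∃ (p : ℕ → ι) (d : ℕ → ℝ≥0), p 0 = i ∧ p m = j ∧ (∀ n < m, d n ∈ E (p n) (p (n + 1))) ∧
      ∑ n ∈ Finset.range m, d n = t := by
  induction m generalizing i t with
  | zero =>
    obtain ⟨rfl, rfl⟩ := h
    exact ⟨fun _ => i, fun _ => 0, rfl, rfl, by simp, by simp⟩
  | succ m ih =>
    obtain ⟨k, a, b, ha, hb, rfl⟩ := h
    obtain ⟨p, d, h0, hm, hd, hs⟩ := ih hb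
    refine ⟨fun n => Nat.casesOn n i p, fun n => Nat.casesOn n a d, rfl, hm, ?_, ?_⟩
    · rintro (_ | n) hn
      · simpa [h0] using ha
      · exact hd n (by omega)
    · rw [Finset.sum_range_succ', add_comm, ← hs]
      rfl

theorem Walk.of_path {m : ℕ} {p : ℕ → ι} {d : ℕ → ℝ≥0}
    (h : ∀ n < m, d n ∈ E (p n) (p (n + 1))) :
    ∑ n ∈ Finset.range m, d n ∈ Walk E m (p 0) (p m) := by
  induction m generalizing p d with
  | zero => exact ⟨rfl, by simp⟩
  | succ m ih =>
    refine ⟨p 1, d 0, ∑ n ∈ Finset.range m, d (n + 1), h 0 (by omega), ?_, ?_⟩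
    · exact ih (p := fun n => p (n + 1)) (d := fun n => d (n + 1)) fun n hn => h _ (by omega)
    · rw [Finset.sum_range_succ', add_comm]

/-- Pigeonhole: a walk with at least as many edges as there are vertices contains a cycle. -/
theorem Walk.exists_cycle [Fintype ι] {m : ℕ} {i j : ι} {t : ℝ≥0} (h : t ∈ Walk E m i j)
    (hm : Fintype.card ι ≤ m) : ∃ (k : ι) (a b c : ℕ) (x y z : ℝ≥0), 0 < b ∧ a + b + c = m ∧
      x ∈ Walk E a i k ∧ y ∈ Walk E b k k ∧ z ∈ Walk E c k j ∧ x + y + z = t := by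
  obtain ⟨p, d, rfl, rfl, hd, rfl⟩ := Walk.exists_path h
  obtain ⟨a, b, hab, hb, e⟩ : ∃ a b, a < b ∧ b ≤ m ∧ p a = p b := by
    obtain ⟨x, y, hne, e⟩ := Fintype.exists_ne_map_eq_of_card_lt
      (fun n : Fin (m + 1) => p n) (by simpa using Nat.lt_succ_of_le hm)
    rcases lt_or_gt_of_ne (fun h => hne (Fin.ext h) : (x : ℕ) ≠ y) with h | h
    · exact ⟨x, y, h, by omega, e⟩
    · exact ⟨y, x, h, by omega, e.symm⟩
  obtain ⟨b, rfl⟩ := Nat.exists_eq_add_of_lt hab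
  obtain ⟨c, rfl⟩ := Nat.exists_eq_add_of_le hb
  refine ⟨p a, a, b + 1, c, ∑ n ∈ Finset.range a, d n, ∑ n ∈ Finset.range (b + 1), d (a + n),
    ∑ n ∈ Finset.range c, d (a + b + 1 + n), by omega, by omega, ?_, ?_, ?_, ?_⟩
  · exact Walk.of_path fun n hn => hd n (by omega)
  · have := Walk.of_path (E := E) (m := b + 1) (p := fun n => p (a + n)) (d := fun n => d (a + n))
      fun n hn => hd (a + n) (by omega)
    simp only [add_zero] at this
    rw [← add_assoc, ← e] at this
    exact this
  · have := Walk.of_path (E := E) (m := c) (p := fun n => p (a + b + 1 + n))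
      (d := fun n => d (a + b + 1 + n)) fun n hn => hd (a + b + 1 + n) (by omega)
    simp only [add_zero] at this
    rwa [← e] at this
  · rw [Finset.sum_range_add _ (a + b + 1), add_assoc a b 1, Finset.sum_range_add _ a]

/-- A closed walk of positive duration can be traded for one whose duration is a positive natural:
if it lasts strictly between `n` and `n + 1`, then `n + 1/2` is a duration too, and going round
twice takes `2 * n + 1`. -/
theorem Dur.exists_nat (hE : ∀ i j, RegInv (E i j)) {k : ι} {y : ℝ≥0} (hy : y ∈ Dur E k k)
    (h0 : 0 < y) : ∃ p : ℕ, 0 < p ∧ (p : ℝ≥0) ∈ Dur E k k := by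
  rcases nat_or_between y with ⟨n, rfl⟩ | ⟨n, h1, h2⟩
  · exact ⟨n, by simpa using h0, hy⟩
  · have hr : (n : ℝ≥0) + 1 / 2 ∈ Dur E k k := by
      refine Dur.regInv hE k k y _ (Reg.of_between h1 h2 ?_ ?_) hy
      · exact lt_add_of_pos_right _ (by norm_num)
      · exact (add_lt_add_iff_left _).2 (by rw [div_lt_one (by norm_num)]; norm_num)
    refine ⟨2 * n + 1, by omega, ?_⟩
    have := Dur.add hr hr
    have e : (n : ℝ≥0) + 1 / 2 + (n + 1 / 2) = ((2 * n + 1 : ℕ) : ℝ≥0) := by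
      push_cast
      rw [add_add_add_comm, add_halves]
      ring
    rwa [e] at this

theorem Def1.walk [Finite ι] (hd : ∀ i j, Def1 (E i j)) (m : ℕ) (i j : ι) :
    Def1 (Walk E m i j) := by
  induction m generalizing i with
  | zero =>
    intro n f hf
    exact ((PredDef.const (i = j)).and (PredDef.eq hf (TermFun.natCast 0))).congr
      fun v => by simp [Walk]
  | succ m ih =>
    intro n f hf
    refine PredDef.exists_finite fun k => PredDef.ex (PredDef.ex ?_)
    exact (hd i k _ _ (TermFun.var _).lift).and ((ih k _ _ (TermFun.var _)).and
      (PredDef.eq ((TermFun.var _).lift.add (TermFun.var _)) hf.lift.lift))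

/-- A walk through a vertex `k` lying on a cycle of positive duration belongs to a set stable under
translation by a positive natural; every other walk has the duration of a walk with fewer edges
than there are vertices. -/
theorem Def1.dur [Fintype ι] (hE : ∀ i j, RegInv (E i j)) (hd : ∀ i j, Def1 (E i j)) (i j : ι) :
    Def1 (Dur E i j) := by
  let N := Fintype.card ι
  have key : ∀ m t, t ∈ Walk E m i j → (∃ m : Fin N, t ∈ Walk E m i j) ∨
      ∃ k, (∃ y ∈ Dur E k k, 0 < y) ∧ ∃ a b, a ∈ Dur E i k ∧ b ∈ Dur E k j ∧ a + b = t := by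
    intro m
    induction m using Nat.strong_induction_on with
    | _ m ih =>
      intro t ht
      rcases lt_or_ge m N with hm | hm
      · exact Or.inl ⟨⟨m, hm⟩, ht⟩
      obtain ⟨k, a, b, c, x, y, z, hb, rfl, hx, hy, hz, rfl⟩ := Walk.exists_cycle ht hm
      rcases (zero_le (a := y)).eq_or_lt with h0 | h0
      · subst h0
        rw [add_zero]
        exact ih (a + c) (by omega) _ (Walk.append hx hz)
      · exact Or.inr ⟨k, ⟨y, ⟨b, hy⟩, h0⟩, x + y, z, Dur.add ⟨a, hx⟩ ⟨b, hy⟩, ⟨c, hz⟩, rfl⟩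
  have periodic : ∀ k, Def1 {t | (∃ y ∈ Dur E k k, 0 < y) ∧
      ∃ a b, a ∈ Dur E i k ∧ b ∈ Dur E k j ∧ a + b = t} := by
    intro k
    by_cases hk : ∃ y ∈ Dur E k k, 0 < y
    · obtain ⟨y, hy, h0⟩ := hk
      obtain ⟨p, hp, hpD⟩ := Dur.exists_nat hE hy h0
      refine Def1.of_periodic ?_ hp ?_
      · rintro s t h ⟨h1, a, b, ha, hb, rfl⟩
        obtain ⟨a', b', h2, h3, rfl⟩ := h.exists_add
        exact ⟨h1, a', b', Dur.regInv hE _ _ _ _ h2 ha, Dur.regInv hE _ _ _ _ h3 hb, rfl⟩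
      · rintro t ⟨h1, a, b, ha, hb, rfl⟩
        exact ⟨h1, a + p, b, Dur.add ha hpD, hb, by rw [add_right_comm]⟩
    · intro n f hf
      exact (PredDef.const False).congr fun v => by simp [hk]
  intro n f hf
  refine ((PredDef.exists_finite fun m : Fin N => Def1.walk hd m i j n f hf).or
    (PredDef.exists_finite fun k => periodic k n f hf)).congr fun v => ⟨?_, ?_⟩
  · rintro ⟨m, hm⟩
    exact key m _ hm
  · rintro (⟨m, hm⟩ | ⟨k, -, a, b, ha, hb, e⟩)
    · exact ⟨m, hm⟩
    · rw [← e]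
      exact Dur.add ha hb

end Walks

end ELA

/-! ### Coverability as two synchronous branches of a run -/

namespace TBPPcore

section OneClock

variable {X : Type}

/-- In the one-clock case a sequence of assignments either keeps the clock or sets it to a
constant. -/
theorem applyUpdates_cval (U : List (Assign Unit)) :
    (∀ w, applyUpdates (cval w) U = cval w) ∨ ∃ k : ℕ, ∀ w, applyUpdates (cval w) U = cval k := by
  have key : ∀ a : Assign Unit, (∀ w, applyAssign (cval w) a = cval w) ∨
      ∃ k : ℕ, ∀ w, applyAssign (cval w) a = cval k := by
    rintro ⟨x, y | k⟩
    · left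
      intro w
      funext z
      simp [applyAssign, cval]
      rfl
    · right
      refine ⟨k, fun w => ?_⟩
      funext z
      simp [applyAssign, cval]
      rfl
  induction U with
  | nil => exact Or.inl fun _ => rfl
  | cons a U ih =>
    have h : ∀ w, applyUpdates (cval w) (a :: U) = applyUpdates (applyAssign (cval w) a) U :=
      fun _ => rfl
    rcases ih with ih | ⟨k, ih⟩
    · rcases key a with h' | ⟨k, h'⟩
      · exact Or.inl fun w => by rw [h, h', ih]
      · exact Or.inr ⟨k, fun w => by rw [h, h', ih]⟩
    · right
      refine ⟨k, fun w => ?_⟩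
      rcases key a with h' | ⟨k', h'⟩ <;> rw [h, h', ih]

/-- `Path ℬ Q u t P v`: along a single branch of the run tree, which follows one child of every
rule applied, `(Q, u)` evolves to `(P, v)` in time `t`. -/
inductive Path (ℬ : TBPP Unit X) (Q : X) (u : ℝ≥0) : ℝ≥0 → X → ℝ≥0 → Prop
  | refl : Path ℬ Q u 0 Q u
  | elapse {t v : ℝ≥0} {P : X} (s : ℝ≥0) : Path ℬ Q u t P v → Path ℬ Q u (t + s) P (v + s)
  | step {t v v' : ℝ≥0} {r : Rule Unit X} {Y : X} : Path ℬ Q u t r.src v → r ∈ ℬ.rules →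
      GuardSat (cval v) r.guard → Y ∈ r.rhs → applyUpdates (cval v) r.update = cval v' →
      Path ℬ Q u t Y v'

/-- `p` and `q` lie at time `t` on two branches issuing from distinct children of one rule
application. -/
def Branch (ℬ : TBPP Unit X) (S : X) (u t : ℝ≥0) (p q : X × Val Unit) : Prop :=
  ∃ (t₁ t₂ : ℝ≥0) (r : Rule Unit X) (w w' : ℝ≥0) (Q₁ Q₂ : X), t₁ + t₂ = t ∧ r ∈ ℬ.rules ∧
    Path ℬ S u t₁ r.src w ∧ GuardSat (cval w) r.guard ∧
    applyUpdates (cval w) r.update = cval w' ∧ ({Q₁, Q₂} : Multiset X) ≤ r.rhs ∧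
    Path ℬ Q₁ w' t₂ p.1 (p.2 ()) ∧ Path ℬ Q₂ w' t₂ q.1 (q.2 ())

variable {ℬ : TBPP Unit X}

theorem Path.trans {Q P R : X} {u v w t s : ℝ≥0} (h : Path ℬ Q u t P v) (h' : Path ℬ P v s R w) :
    Path ℬ Q u (t + s) R w := by
  induction h' with
  | refl => simpa using h
  | elapse s _ ih => rw [← add_assoc]; exact ih.elapse s
  | step _ hr hg hY hu ih => exact ih.step hr hg hY hu

theorem Branch.symm {S : X} {u t : ℝ≥0} {p q : X × Val Unit} (h : Branch ℬ S u t p q) :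
    Branch ℬ S u t q p := by
  obtain ⟨t₁, t₂, r, w, w', Q₁, Q₂, e, hr, h0, hg, hu, hle, h1, h2⟩ := h
  exact ⟨t₁, t₂, r, w, w', Q₂, Q₁, e, hr, h0, hg, hu, by rwa [Multiset.pair_comm], h2, h1⟩

theorem Run.branches {S : X} {u t : ℝ≥0} {α γ : Config Unit X} (h : Run ℬ α t γ)
    (hα : α = {(S, cval u)}) : ∃ l : List (X × Val Unit), (l : Multiset _) = γ ∧
      (∀ p ∈ l, Path ℬ S u t p.1 (p.2 ())) ∧ l.Pairwise (Branch ℬ S u t) := by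
  induction h with
  | refl =>
    exact ⟨[(S, cval u)], hα.symm, fun p hp => by
      obtain rfl := List.mem_singleton.1 hp
      exact Path.refl, List.pairwise_singleton _ _⟩
  | @tail β _ _ s _ hs ih =>
    obtain ⟨l, hl, hp, hb⟩ := ih
    cases hs with
    | elapse =>
      refine ⟨l.map fun p => (p.1, fun c => p.2 c + s), ?_, ?_, ?_⟩
      · rw [← hl]; rfl
      · simp only [List.mem_map]
        rintro _ ⟨p, hpl, rfl⟩
        exact (hp p hpl).elapse s
      · rw [List.pairwise_map]
        refine hb.imp ?_
        rintro p q ⟨t₁, t₂, r, w, w', Q₁, Q₂, e, hr, h0, hg, hu, hle, h1, h2⟩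
        exact ⟨t₁, t₂ + s, r, w, w', Q₁, Q₂, by rw [← add_assoc, e], hr, h0, hg, hu, hle,
          h1.elapse s, h2.elapse s⟩
    | discrete β r μ hr hg =>
      rw [add_zero]
      obtain ⟨lb, rfl⟩ := Quot.exists_rep β
      obtain ⟨lr, hlr⟩ := Quot.exists_rep r.rhs
      change (lr : Multiset X) = r.rhs at hlr
      have hperm : l.Perm (lb ++ [(r.src, μ)]) := Multiset.coe_eq_coe.1 hl
      have hb' := (hperm.pairwise_iff (fun h => Branch.symm h)).1 hb
      rw [List.pairwise_append] at hb'
      have hp' : ∀ p ∈ lb ++ [(r.src, μ)], Path ℬ S u _ p.1 (p.2 ()) :=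
        fun p h => hp p (hperm.mem_iff.2 h)
      have hroot := hp' (r.src, μ) (by simp)
      refine ⟨lb ++ lr.map fun Y => (Y, applyUpdates μ r.update), ?_, ?_, ?_⟩
      · rw [← hlr]; rfl
      · intro p hpm
        rcases List.mem_append.1 hpm with h | h
        · exact hp' p (List.mem_append_left _ h)
        · obtain ⟨Y, hY, rfl⟩ := List.mem_map.1 h
          exact hroot.step hr hg (by rw [← hlr]; exact hY) rfl
      · rw [List.pairwise_append]
        refine ⟨hb'.1, ?_, ?_⟩
        · rw [List.pairwise_map, List.pairwise_iff_forall_sublist]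
          intro Q₁ Q₂ hsub
          exact ⟨_, 0, r, μ (), _, Q₁, Q₂, add_zero _, hr, hroot, hg, rfl,
            by rw [← hlr]; exact hsub.subperm, Path.refl, Path.refl⟩
        · intro p hpm q hq
          obtain ⟨Y, hY, rfl⟩ := List.mem_map.1 hq
          obtain ⟨t₁, t₂, r', w, w', Q₁, Q₂, e, hr', h0, hg', hu, hle, h1, h2⟩ :=
            hb'.2.2 p hpm (r.src, μ) (by simp)
          exact ⟨t₁, t₂, r', w, w', Q₁, Q₂, e, hr', h0, hg', hu, hle, h1,
            h2.step hr hg (by rw [← hlr]; exact hY) rfl⟩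

theorem shift_zero (α : Config Unit X) : shift 0 α = α := by
  simp [shift]

theorem shift_shift (s t : ℝ≥0) (α : Config Unit X) : shift t (shift s α) = shift (s + t) α := by
  simp [shift, add_assoc]

theorem shift_add (t : ℝ≥0) (α β : Config Unit X) : shift t (α + β) = shift t α + shift t β := by
  simp [shift]

theorem Run.trans {α β γ : Config Unit X} {t s : ℝ≥0} (h : Run ℬ α t β) (h' : Run ℬ β s γ) :
    Run ℬ α (t + s) γ := by
  induction h' with
  | refl => simpa using h
  | tail _ hs ih => rw [← add_assoc]; exact ih.tail hs

theorem Run.of_step {α β : Config Unit X} {t : ℝ≥0} (h : Step ℬ α t β) : Run ℬ α t β := by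
  simpa using (Run.refl α).tail h

/-- A run can be interrupted at any intermediate time. -/
theorem Run.split {α γ : Config Unit X} {t s c : ℝ≥0} (h : Run ℬ α c γ) (hc : c = t + s) :
    ∃ β, Run ℬ α t β ∧ Run ℬ β s γ := by
  induction h generalizing s with
  | refl =>
    obtain ⟨rfl, rfl⟩ := add_eq_zero.1 hc.symm
    exact ⟨_, Run.refl _, Run.refl _⟩
  | @tail β γ a b hrun hs ih =>
    rcases le_total t a with hta | hat
    · obtain ⟨d, rfl⟩ := exists_add_of_le hta
      obtain ⟨β', h1, h2⟩ := ih rfl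
      have e : s = d + b := by
        rw [add_assoc] at hc
        exact (add_left_cancel hc).symm
      exact ⟨β', h1, e ▸ h2.tail hs⟩
    · obtain ⟨d, rfl⟩ := exists_add_of_le hat
      have e : b = d + s := by
        rw [add_assoc] at hc
        exact add_left_cancel hc
      cases hs with
      | elapse _ _ =>
        subst e
        refine ⟨shift d β, hrun.tail (Step.elapse β d), ?_⟩
        rw [← shift_shift]
        exact Run.of_step (Step.elapse _ _)
      | discrete β r μ hr hg =>
        obtain ⟨rfl, rfl⟩ := add_eq_zero.1 e.symm
        exact ⟨_, by simpa using hrun.tail (Step.discrete β r μ hr hg), Run.refl _⟩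

theorem Run.add_idle {β β' : Config Unit X} {s : ℝ≥0} (h : Run ℬ β s β') (α : Config Unit X) :
    Run ℬ (α + β) s (shift s α + β') := by
  induction h with
  | refl => rw [shift_zero]; exact Run.refl _
  | tail _ hs ih =>
    refine ih.tail ?_
    cases hs with
    | elapse _ s =>
      rw [← shift_shift, ← shift_add]
      exact Step.elapse _ _
    | discrete β r μ hr hg =>
      rw [add_zero, ← add_assoc, ← add_assoc]
      exact Step.discrete _ r μ hr hg

/-- Two runs of equal duration can be executed side by side. -/
theorem Run.par {α α' β β' : Config Unit X} {t : ℝ≥0} (h : Run ℬ α t α') (h' : Run ℬ β t β') :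
    Run ℬ (α + β) t (α' + β') := by
  induction h generalizing β' with
  | refl => simpa [shift_zero] using h'.add_idle α
  | @tail α₁ _ _ s _ hs ih =>
    obtain ⟨β₁, h1, h2⟩ := h'.split rfl
    refine (ih h1).trans ?_
    cases hs with
    | elapse => exact h2.add_idle α₁
    | discrete α₁ r μ hr hg =>
      have h3 := h2.add_idle (α₁ + {(r.src, μ)})
      rw [shift_zero] at h3
      have h4 := Step.discrete (B := ℬ) (α₁ + β') r μ hr hg
      have h5 := h3.tail (s := 0) (by rw [add_right_comm]; exact h4)
      rw [add_zero, add_right_comm _ β'] at h5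
      exact h5

theorem Path.run {Q P : X} {u v t : ℝ≥0} (h : Path ℬ Q u t P v) :
    ∃ γ, Run ℬ {(Q, cval u)} t (γ + {(P, cval v)}) := by
  induction h with
  | refl => exact ⟨0, by rw [zero_add]; exact Run.refl _⟩
  | @elapse t v P s _ ih =>
    obtain ⟨γ, h⟩ := ih
    refine ⟨shift s γ, ?_⟩
    have := h.tail (Step.elapse _ s)
    rw [shift_add] at this
    exact this
  | @step t v v' r Y _ hr hg hY hu ih =>
    obtain ⟨γ, h⟩ := ih
    have := h.tail (Step.discrete γ r _ hr hg)
    obtain ⟨δ, hδ⟩ := Multiset.exists_cons_of_mem hY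
    rw [hu, hδ, Multiset.map_cons, ← Multiset.singleton_add, add_comm {_}, ← add_assoc,
      add_zero] at this
    exact ⟨_, this⟩

theorem cover_iff {S A B : X} {u v₁ v₂ : ℝ≥0} :
    Cover ℬ {(S, cval u)} {(A, cval v₁), (B, cval v₂)} ↔
      ∃ t, Branch ℬ S u t (A, cval v₁) (B, cval v₂) := by
  constructor
  · rintro ⟨γ, ⟨t, hrun⟩, hle⟩
    obtain ⟨l, rfl, -, hb⟩ := hrun.branches rfl
    obtain ⟨δ, hδ⟩ := Multiset.le_iff_exists_add.1 hle
    obtain ⟨ld, rfl⟩ := Quot.exists_rep δ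
    have hperm : l.Perm ([(A, cval v₁), (B, cval v₂)] ++ ld) := Multiset.coe_eq_coe.1 hδ
    have := (hperm.pairwise_iff (fun h => Branch.symm h)).1 hb
    rw [List.pairwise_append] at this
    exact ⟨t, by simpa using this.1⟩
  · rintro ⟨t, t₁, t₂, r, w, w', Q₁, Q₂, rfl, hr, h0, hg, hu, hle, h1, h2⟩
    obtain ⟨γ, hγ⟩ := h0.run
    obtain ⟨δ, hδ⟩ := Multiset.le_iff_exists_add.1 hle
    obtain ⟨γ₁, hγ₁⟩ := h1.run
    obtain ⟨γ₂, hγ₂⟩ := h2.run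
    have hstep := hγ.tail (Step.discrete γ r _ hr hg)
    rw [hu, hδ, Multiset.map_add, ← add_assoc, add_zero] at hstep
    have hmap : Multiset.map (fun Y => (Y, cval w')) ({Q₁, Q₂} : Multiset X)
        = {(Q₁, cval w')} + {(Q₂, cval w')} := rfl
    rw [hmap, add_right_comm] at hstep
    refine ⟨_, ⟨_, hstep.trans ((hγ₁.par hγ₂).add_idle _)⟩, ?_⟩
    refine le_trans ?_ (Multiset.le_add_left _ _)
    rw [add_add_add_comm]
    exact Multiset.le_add_left _ _

/-! ### Reachability along a branch -/

/-- Reachability along a branch without resets, possibly with delays. -/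
inductive NoReset (ℬ : TBPP Unit X) (Q : X) (u : ℝ≥0) : X → ℝ≥0 → Prop
  | refl : NoReset ℬ Q u Q u
  | elapse {P : X} {v v' : ℝ≥0} : NoReset ℬ Q u P v → v ≤ v' → NoReset ℬ Q u P v'
  | step {v : ℝ≥0} {r : Rule Unit X} {Y : X} : NoReset ℬ Q u r.src v → r ∈ ℬ.rules →
      GuardSat (cval v) r.guard → Y ∈ r.rhs →
      (∀ w, applyUpdates (cval w) r.update = cval w) → NoReset ℬ Q u Y v

/-- Some rule takes `(P, w)` to a child `Y` with clock value `k`, independently of `w`. -/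
def ResetStep (ℬ : TBPP Unit X) (P : X) (w : ℝ≥0) (Y : X) (k : ℕ) : Prop :=
  ∃ r ∈ ℬ.rules, r.src = P ∧ GuardSat (cval w) r.guard ∧ Y ∈ r.rhs ∧
    ∀ w', applyUpdates (cval w') r.update = cval k

/-- `M` bounds all constants in guards and all constants that rules reset the clock to. -/
def Bounds (ℬ : TBPP Unit X) (M : ℕ) : Prop :=
  ∀ r ∈ ℬ.rules, (∀ a ∈ r.guard, a.bound ≤ M) ∧
    ∀ k : ℕ, (∀ w, applyUpdates (cval w) r.update = cval k) → k ≤ M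

/-- Possible durations from a reset into `(i.1, i.2)` to the next reset, into `(j.1, j.2)`. -/
def ResetEdge (ℬ : TBPP Unit X) (M : ℕ) (i j : X × Fin (M + 1)) : Set ℝ≥0 :=
  {t | ∃ P, NoReset ℬ i.1 (i.2 : ℕ) P ((i.2 : ℕ) + t) ∧
    ResetStep ℬ P ((i.2 : ℕ) + t) j.1 (j.2 : ℕ)}

open ELA

theorem exists_guard_bound (g : List (GuardAtom Unit)) : ∃ M, ∀ a ∈ g, a.bound ≤ M := by
  induction g with
  | nil => exact ⟨0, by simp⟩
  | cons a g ih =>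
    obtain ⟨M, hM⟩ := ih
    refine ⟨max a.bound M, ?_⟩
    simp only [List.mem_cons, forall_eq_or_imp]
    exact ⟨le_max_left _ _, fun b hb => (hM b hb).trans (le_max_right _ _)⟩

theorem exists_bounds (ℬ : TBPP Unit X) : ∃ M, Bounds ℬ M := by
  have one : ∀ r : Rule Unit X, ∃ M, (∀ a ∈ r.guard, a.bound ≤ M) ∧
      ∀ k : ℕ, (∀ w, applyUpdates (cval w) r.update = cval k) → k ≤ M := by
    intro r
    obtain ⟨M₁, h1⟩ := exists_guard_bound r.guard
    by_cases hk : ∃ k : ℕ, ∀ w, applyUpdates (cval w) r.update = cval k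
    · obtain ⟨k, hk⟩ := hk
      refine ⟨max M₁ k, fun a ha => (h1 a ha).trans (le_max_left _ _), fun k' hk' => ?_⟩
      have h := congrFun ((hk 0).symm.trans (hk' 0)) ()
      have h' : k = k' := by simpa [cval] using h
      exact h' ▸ le_max_right _ _
    · exact ⟨M₁, h1, fun k hk' => absurd ⟨k, hk'⟩ hk⟩
  choose f hf using one
  obtain ⟨M, hM⟩ := (ℬ.finite.image f).bddAbove
  refine ⟨M, fun r hr => ?_⟩
  have hle : f r ≤ M := hM ⟨r, hr, rfl⟩
  exact ⟨fun a ha => ((hf r).1 a ha).trans hle, fun k hk => ((hf r).2 k hk).trans hle⟩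

theorem GuardSat.of_regM {M : ℕ} {g : List (GuardAtom Unit)} (hM : ∀ a ∈ g, a.bound ≤ M)
    {v v' : ℝ≥0} (hv : RegM M v v') (h : GuardSat (cval v) g) : GuardSat (cval v') g := by
  intro a ha
  have h1 := h a ha
  obtain ⟨h2, h3⟩ := hv a.bound (hM a ha)
  revert h1
  cases a.cmp <;> simp only [Cmp.Sat, cval]
  · exact h2.1
  · exact h3.1
  · intro e
    exact le_antisymm (h3.1 e.le) (not_lt.1 fun hlt => e.not_lt (h2.2 hlt))
  · rw [ge_iff_le, ge_iff_le, ← not_lt, ← not_lt (a := v'), h2]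
    exact id
  · rw [gt_iff_lt, gt_iff_lt, ← not_le, ← not_le (a := v'), h3]
    exact id

theorem NoReset.le {Q P : X} {u v : ℝ≥0} (h : NoReset ℬ Q u P v) : u ≤ v := by
  induction h with
  | refl => exact le_rfl
  | elapse _ h ih => exact ih.trans h
  | step _ _ _ _ _ ih => exact ih

/-- Reachability without resets depends only on the regions of the two clock values, and on their
order. -/
theorem NoReset.of_regM {M : ℕ} (hM : Bounds ℬ M) {Q P : X} {u v u' v' : ℝ≥0}
    (h : NoReset ℬ Q u P v) (hu : RegM M u u') (hv : RegM M v v') (hle : u' ≤ v') :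
    NoReset ℬ Q u' P v' := by
  induction h generalizing v' with
  | refl => exact NoReset.refl.elapse hle
  | @elapse P v w h hvw ih =>
    by_cases h1 : RegM M u v
    · exact (ih (h1.symm.trans hu) le_rfl).elapse hle
    by_cases h2 : RegM M v w
    · exact ih (h2.trans hv) hle
    · exact (ih (RegM.refl M v) (RegM.le_of_not h.le h1 hu (RegM.refl M v))).elapse
        (RegM.le_of_not hvw h2 (RegM.refl M v) hv)
  | step _ hr hg hY hup ih =>
    exact (ih hv hle).step hr (GuardSat.of_regM (hM _ hr).1 hv hg) hY hup

theorem ResetStep.of_regM {M : ℕ} (hM : Bounds ℬ M) {P Y : X} {k : ℕ} {w w' : ℝ≥0}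
    (h : ResetStep ℬ P w Y k) (hw : RegM M w w') : ResetStep ℬ P w' Y k := by
  obtain ⟨r, hr, hs, hg, hY, hu⟩ := h
  exact ⟨r, hr, hs, GuardSat.of_regM (hM r hr).1 hw hg, hY, hu⟩

theorem ResetStep.le {M : ℕ} (hM : Bounds ℬ M) {P Y : X} {k : ℕ} {w : ℝ≥0}
    (h : ResetStep ℬ P w Y k) : k ≤ M := by
  obtain ⟨r, hr, -, -, -, hu⟩ := h
  exact (hM r hr).2 k hu

theorem def2_noReset {M : ℕ} (hM : Bounds ℬ M) (Q P : X) : Def2 fun u v => NoReset ℬ Q u P v := by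
  have key : Def2 fun u v => ∃ u' v', RegM M u' u ∧ RegM M v' v ∧ NoReset ℬ Q u' P v' :=
    Def2.of_regM M fun u v u' v' hu hv ⟨a, b, ha, hb, h⟩ =>
      ⟨a, b, ha.trans hu, hb.trans hv, h⟩
  intro n f g hf hg
  refine ((PredDef.le hf hg).and (key n f g hf hg)).congr fun v => ⟨fun h => ?_, ?_⟩
  · exact ⟨h.le, _, _, RegM.refl _ _, RegM.refl _ _, h⟩
  · rintro ⟨hle, u', v', hu, hv, h⟩
    exact h.of_regM hM hu hv hle

theorem def1_resetStep {M : ℕ} (hM : Bounds ℬ M) (P Y : X) (k : ℕ) :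
    Def1 {w | ResetStep ℬ P w Y k} :=
  Def1.of_regM M fun _ _ hu h => ResetStep.of_regM hM h hu

theorem def1_resetEdge [Finite X] {M : ℕ} (hM : Bounds ℬ M) (i j : X × Fin (M + 1)) :
    Def1 (ResetEdge ℬ M i j) := by
  intro n f hf
  have hk : TermFun fun v => ((i.2 : ℕ) : ℝ≥0) + f v := (TermFun.natCast _).add hf
  exact PredDef.exists_finite fun P =>
    (def2_noReset hM i.1 P n _ _ (TermFun.natCast _) hk).and (def1_resetStep hM P j.1 j.2 n _ hk)

theorem regInv_resetEdge {M : ℕ} (hM : Bounds ℬ M) (i j : X × Fin (M + 1)) :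
    RegInv (ResetEdge ℬ M i j) := by
  rintro s t h ⟨P, h1, h2⟩
  have h' := (Reg.add_nat_iff (i.2 : ℕ)).2 h M
  exact ⟨P, h1.of_regM hM (RegM.refl _ _) h' le_self_add, h2.of_regM hM h'⟩

theorem NoReset.path {Q P : X} {u v : ℝ≥0} (h : NoReset ℬ Q u P v) :
    ∃ t, u + t = v ∧ Path ℬ Q u t P v := by
  induction h with
  | refl => exact ⟨0, add_zero _, Path.refl⟩
  | elapse _ hle ih =>
    obtain ⟨t, rfl, h⟩ := ih
    obtain ⟨s, rfl⟩ := exists_add_of_le hle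
    exact ⟨t + s, (add_assoc _ _ _).symm, h.elapse s⟩
  | step _ hr hg hY hu ih =>
    obtain ⟨t, e, h⟩ := ih
    exact ⟨t, e, h.step hr hg hY (hu _)⟩

theorem ResetStep.path {P Y Q : X} {k : ℕ} {u w t : ℝ≥0} (h : ResetStep ℬ P w Y k)
    (hp : Path ℬ Q u t P w) : Path ℬ Q u t Y k := by
  obtain ⟨r, hr, rfl, hg, hY, hu⟩ := h
  exact hp.step hr hg hY (hu _)

theorem path_of_walk {M m : ℕ} {i j : X × Fin (M + 1)} {t : ℝ≥0}
    (h : t ∈ Walk (ResetEdge ℬ M) m i j) :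
    Path ℬ i.1 ((i.2 : ℕ) : ℝ≥0) t j.1 ((j.2 : ℕ) : ℝ≥0) := by
  induction m generalizing i t with
  | zero =>
    obtain ⟨rfl, rfl⟩ := h
    exact Path.refl
  | succ m ih =>
    obtain ⟨k, a, b, ⟨P, h1, h2⟩, hb, rfl⟩ := h
    obtain ⟨s, e, hp⟩ := h1.path
    obtain rfl := add_left_cancel e
    exact (h2.path hp).trans (ih hb)

/-- A branch either never resets the clock, or splits at its first and its last reset into a part
without resets, a walk in the graph of resets, and another part without resets. -/
theorem path_iff {M : ℕ} (hM : Bounds ℬ M) {Q P : X} {u v t : ℝ≥0} :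
    Path ℬ Q u t P v ↔ (u + t = v ∧ NoReset ℬ Q u P v) ∨
      ∃ (i j : X × Fin (M + 1)) (P₀ : X) (w d : ℝ≥0), NoReset ℬ Q u P₀ w ∧
        ResetStep ℬ P₀ w i.1 (i.2 : ℕ) ∧ d ∈ Dur (ResetEdge ℬ M) i j ∧
        NoReset ℬ j.1 (j.2 : ℕ) P v ∧ t + u + (j.2 : ℕ) = w + d + v := by
  constructor
  · intro h
    induction h with
    | refl => exact Or.inl ⟨add_zero _, NoReset.refl⟩
    | elapse s _ ih =>
      rcases ih with ⟨rfl, h⟩ | ⟨i, j, P₀, w, d, h1, h2, h3, h4, e⟩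
      · exact Or.inl ⟨(add_assoc _ _ _).symm, h.elapse le_self_add⟩
      · refine Or.inr ⟨i, j, P₀, w, d, h1, h2, h3, h4.elapse le_self_add, ?_⟩
        rw [← add_assoc, ← e]
        ring
    | @step t v v' r Y _ hr hg hY hu ih =>
      rcases applyUpdates_cval r.update with hid | ⟨k, hk⟩
      · obtain rfl : v = v' := congrFun ((hid v).symm.trans hu) ()
        rcases ih with ⟨e, h⟩ | ⟨i, j, P₀, w, d, h1, h2, h3, h4, e⟩
        · exact Or.inl ⟨e, h.step hr hg hY hid⟩
        · exact Or.inr ⟨i, j, P₀, w, d, h1, h2, h3, h4.step hr hg hY hid, e⟩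
      · obtain rfl : (k : ℝ≥0) = v' := congrFun ((hk v).symm.trans hu) ()
        have hres : ResetStep ℬ r.src v Y k := ⟨r, hr, rfl, hg, hY, hk⟩
        let j' : X × Fin (M + 1) := (Y, ⟨k, Nat.lt_succ_of_le (hres.le hM)⟩)
        right
        rcases ih with ⟨rfl, h⟩ | ⟨i, j, P₀, w, d, h1, h2, h3, h4, e⟩
        · refine ⟨j', j', r.src, u + t, 0, h, hres, Dur.zero _, NoReset.refl, ?_⟩
          change t + u + (k : ℝ≥0) = _
          ring
        · obtain ⟨s, rfl⟩ := exists_add_of_le h4.le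
          have hedge : s ∈ ResetEdge ℬ M j j' := ⟨r.src, h4, hres⟩
          refine ⟨i, j', P₀, w, d + s, h1, h2, Dur.add h3 (Dur.edge hedge), NoReset.refl, ?_⟩
          change t + u + (k : ℝ≥0) = _
          have e' : t + u = w + d + s := by
            refine add_right_cancel (b := (((j.2 : ℕ) : ℝ≥0))) ?_
            rw [e]
            ring
          rw [e']
          ring
  · rintro (⟨e, h⟩ | ⟨i, j, P₀, w, d, h1, h2, ⟨m, h3⟩, h4, e⟩)
    · obtain ⟨s, e', hp⟩ := h.path
      obtain rfl := add_left_cancel (e.trans e'.symm)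
      exact hp
    · obtain ⟨a, rfl, ha⟩ := h1.path
      obtain ⟨b, rfl, hb⟩ := h4.path
      have := ((h2.path ha).trans (path_of_walk h3)).trans hb
      obtain rfl : t = a + d + b := by
        refine add_right_cancel (b := u + (((j.2 : ℕ) : ℝ≥0))) ?_
        rw [← add_assoc, e]
        ring
      exact this

theorem def3_path [Fintype X] (Q P : X) : Def3 fun u t v => Path ℬ Q u t P v := by
  obtain ⟨M, hM⟩ := exists_bounds ℬ
  intro n f g h hf hg hh
  refine PredDef.congr ?_ fun v => path_iff hM
  refine ((PredDef.eq (hf.add hg) hh).and (def2_noReset hM Q P n _ _ hf hh)).or ?_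
  refine PredDef.exists_finite fun i => PredDef.exists_finite fun j =>
    PredDef.exists_finite fun P₀ => PredDef.ex (PredDef.ex ?_)
  have hw : TermFun fun v : Fin (n + 1 + 1) → ℝ≥0 => v (Fin.castSucc (Fin.last n)) := TermFun.var _
  have hd : TermFun fun v : Fin (n + 1 + 1) → ℝ≥0 => v (Fin.last (n + 1)) := TermFun.var _
  exact (def2_noReset hM Q P₀ _ _ _ hf.lift.lift hw).and
    ((def1_resetStep hM P₀ i.1 i.2 _ _ hw).and
    ((Def1.dur (regInv_resetEdge hM) (def1_resetEdge hM) i j _ _ hd).and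
    ((def2_noReset hM j.1 P _ _ _ (TermFun.natCast _) hh.lift.lift).and
    (PredDef.eq ((hg.lift.lift.add hf.lift.lift).add (TermFun.natCast _))
      ((hw.add hd).add hh.lift.lift)))))

theorem def1_guard (g : List (GuardAtom Unit)) : Def1 {w | GuardSat (cval w) g} := by
  obtain ⟨M, hM⟩ := exists_guard_bound g
  exact Def1.of_regM M fun _ _ hu h => GuardSat.of_regM hM hu h

theorem def2_update (U : List (Assign Unit)) :
    Def2 fun w w' => applyUpdates (cval w) U = cval w' := by
  have cval_inj : ∀ {a b : ℝ≥0}, cval a = cval b ↔ a = b :=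
    fun {a b} => ⟨fun h => congrFun h (), fun h => by rw [h]⟩
  intro n f g hf hg
  rcases applyUpdates_cval U with h | ⟨k, h⟩
  · exact (PredDef.eq hf hg).congr fun v => by simp only [h, cval_inj]
  · exact (PredDef.eq (TermFun.natCast k) hg).congr fun v => by simp only [h, cval_inj]

theorem def3_cover [Fintype X] (S A B : X) :
    Def3 fun u v₁ v₂ => Cover ℬ {(S, cval u)} {(A, cval v₁), (B, cval v₂)} := by
  have : Finite ℬ.rules := ℬ.finite
  have key : Def3 fun u v₁ v₂ => ∃ (r : ℬ.rules) (Q₁ Q₂ : X), ∃ t₁ t₂ w w' : ℝ≥0,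
      ({Q₁, Q₂} : Multiset X) ≤ r.1.rhs ∧ Path ℬ S u t₁ r.1.src w ∧
      GuardSat (cval w) r.1.guard ∧ applyUpdates (cval w) r.1.update = cval w' ∧
      Path ℬ Q₁ w' t₂ A v₁ ∧ Path ℬ Q₂ w' t₂ B v₂ := by
    intro n f g h hf hg hh
    refine PredDef.exists_finite fun r => PredDef.exists_finite fun Q₁ =>
      PredDef.exists_finite fun Q₂ => PredDef.ex (PredDef.ex (PredDef.ex (PredDef.ex ?_)))
    have x1 := (TermFun.var (Fin.last n)).lift.lift.lift
    have x2 := (TermFun.var (Fin.last (n + 1))).lift.lift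
    have x3 := (TermFun.var (Fin.last (n + 2))).lift
    have x4 := TermFun.var (Fin.last (n + 3))
    exact (PredDef.const _).and
      ((def3_path S r.1.src _ _ _ _ hf.lift.lift.lift.lift x1 x3).and
      ((def1_guard r.1.guard _ _ x3).and
      ((def2_update r.1.update _ _ _ x3 x4).and
      ((def3_path Q₁ A _ _ _ _ x4 x2 hg.lift.lift.lift.lift).and
      (def3_path Q₂ B _ _ _ _ x4 x2 hh.lift.lift.lift.lift)))))
  intro n f g h hf hg hh
  refine (key n f g h hf hg hh).congr fun v => ?_
  refine cover_iff.trans ?_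
  constructor
  · rintro ⟨t, t₁, t₂, r, w, w', Q₁, Q₂, -, hr, h0, hg, hu, hle, h1, h2⟩
    exact ⟨⟨r, hr⟩, Q₁, Q₂, t₁, t₂, w, w', hle, h0, hg, hu, h1, h2⟩
  · rintro ⟨⟨r, hr⟩, Q₁, Q₂, t₁, t₂, w, w', hle, h0, hg, hu, h1, h2⟩
    exact ⟨t₁ + t₂, t₁, t₂, r, w, w', Q₁, Q₂, rfl, hr, h0, hg, hu, hle, h1, h2⟩

end OneClock

end TBPPcore

open TBPPcore in
/-- for every one-clock TBPP `ℬ` (finitely many nonterminals)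
and nonterminals `S, A, B`, the coverability relation
`{(u, v₁, v₂) : {(S,u)} ↝cover {(A,v₁), (B,v₂)}}` is definable in existential
linear arithmetic. -/
theorem one_clock_TBPP_coverability_relation_ELA_definable
    (X : Type) [Fintype X] (ℬ : TBPP Unit X) (S A B : X) :
    ELA.Definable 3 {w : Fin 3 → ℝ |
      ∃ u v₁ v₂ : ℝ≥0, w 0 = (u : ℝ) ∧ w 1 = (v₁ : ℝ) ∧ w 2 = (v₂ : ℝ) ∧
        Cover ℬ {(S, cval u)} {(A, cval v₁), (B, cval v₂)}} :=
  ELA.Def3.definable (TBPPcore.def3_cover S A B)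
end

section
/- Let ℬ be a TBPP and 𝒜 its linearization. For all nonterminals A, B of ℬ, clock valuations μ, ν, and t ≥ 0: (A,μ) →*(t) (B,ν) in the timed automaton 𝒜 if and only if there exists a configuration γ such that {(A,μ)} →*(t) {(B,ν)} ⊎ γ in ℬ. -/
/-!
A run of the linearization follows one branch of the derivation tree of a run of `ℬ`.

From the linearization to `ℬ`, every step of the single process is imitated by `ℬ` inside an
arbitrary context: the rule it uses comes from a rule of `ℬ` whose right-hand side has at most one
further nonterminal, which joins the context (`step_lift`).

From `ℬ` to the linearization, processes do not interact, so every process present after a step of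
`ℬ` has an ancestor before it, from which it arises by a single linearized step or, if a discrete
step rewrote another process, by no step at all (`step_ancestor`). Tracing the chosen process
`(B, ν)` back to the start, where `(A, μ)` is the only possible ancestor, gives the run.
Both arguments preserve delays step by step, hence also durations.
-/

open scoped NNReal

namespace TBPPcore

/-- `𝒜` is the linearization of `ℬ`: it keeps all rules of `ℬ` with
right-hand side of size 1, replaces every branching rule `A →(φ;U) B₁ ⊎ B₂`
by the two rules `A →(φ;U) B₁` and `A →(φ;U) B₂`, and drops vanishing rules. -/
def IsLinearization {C X : Type} (ℬ 𝒜 : TBPP C X) : Prop :=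
  𝒜.rules =
    {r | r ∈ ℬ.rules ∧ Multiset.card r.rhs = 1} ∪
    {r' | ∃ r ∈ ℬ.rules, Multiset.card r.rhs = 2 ∧
      ∃ Y ∈ r.rhs, r' = ⟨r.src, r.guard, r.update, {Y}⟩}

end TBPPcore

namespace TBPPcore

section

variable {C X : Type} {ℬ 𝒜 : TBPP C X}

/-- The rules of the linearization, uniformly: each keeps exactly one nonterminal of the right-hand
side of a rule of `ℬ`. -/
lemma IsLinearization.mem_rules_iff (hlin : IsLinearization ℬ 𝒜) (r' : Rule C X) :
    r' ∈ 𝒜.rules ↔ ∃ r ∈ ℬ.rules, ∃ Y ∈ r.rhs, r' = ⟨r.src, r.guard, r.update, {Y}⟩ := by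
  rw [hlin]
  constructor
  · rintro (⟨hr, hc⟩ | ⟨r, hr, -, h⟩)
    · obtain ⟨Y, hY⟩ := Multiset.card_eq_one.1 hc
      refine ⟨r', hr, Y, by simp [hY], ?_⟩
      rw [← hY]
    · exact ⟨r, hr, h⟩
  · rintro ⟨r, hr, Y, hY, rfl⟩
    have hpos : 0 < Multiset.card r.rhs := Multiset.card_pos_iff_exists_mem.2 ⟨Y, hY⟩
    have hle := ℬ.small r hr
    obtain hc | hc : Multiset.card r.rhs = 1 ∨ Multiset.card r.rhs = 2 := by omega
    · left
      obtain ⟨Z, hZ⟩ := Multiset.card_eq_one.1 hc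
      obtain rfl : Y = Z := by simpa [hZ] using hY
      rw [← hZ]
      exact ⟨hr, hc⟩
    · exact Or.inr ⟨r, hr, hc, Y, hY, rfl⟩

variable [DecidableEq C]

/-- A step of the linearization from a single process leads to a single process, and `ℬ` can
imitate it next to any context `γ`, which may age and grow in the process. -/
lemma step_lift (hlin : IsLinearization ℬ 𝒜) {α δ : Config C X} {s : ℝ≥0}
    (h : Step 𝒜 α s δ) {p : X × Val C} (hα : α = {p}) :
    ∃ p', δ = {p'} ∧ ∀ γ, ∃ γ', Step ℬ ({p} + γ) s ({p'} + γ') := by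
  cases h with
  | elapse _ s =>
    subst hα
    refine ⟨_, Multiset.map_singleton _ _, fun γ => ⟨shift s γ, ?_⟩⟩
    have := Step.elapse (B := ℬ) ({p} + γ) s
    rwa [shift, Multiset.map_add, Multiset.map_singleton] at this
  | discrete β r' μ hr hg =>
    obtain ⟨r, hrℬ, Y, hY, rfl⟩ := (hlin.mem_rules_iff r').1 hr
    have hβ : β = 0 := by
      have := congrArg Multiset.card hα
      rw [← Multiset.card_eq_zero]
      simpa using this
    subst hβ
    obtain rfl : (r.src, μ) = p := by simpa using hα
    refine ⟨(Y, applyUpdates μ r.update), by simp, fun γ => ?_⟩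
    obtain ⟨R, hR⟩ := Multiset.exists_cons_of_mem hY
    refine ⟨R.map (fun Z => (Z, applyUpdates μ r.update)) + γ, ?_⟩
    have := Step.discrete (B := ℬ) γ r μ hrℬ hg
    rw [hR, Multiset.map_cons, ← Multiset.singleton_add, add_comm γ, add_comm γ, add_assoc] at this
    exact this

lemma run_lift (hlin : IsLinearization ℬ 𝒜) {p : X × Val C} {δ : Config C X} {t : ℝ≥0}
    (h : Run 𝒜 {p} t δ) :
    ∃ q, δ = {q} ∧ ∃ γ, Run ℬ {p} t ({q} + γ) := by
  induction h with
  | refl => exact ⟨p, rfl, 0, by simpa using Run.refl (B := ℬ) {p}⟩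
  | tail _ hs ih =>
    obtain ⟨q, hq, γ, hγ⟩ := ih
    obtain ⟨q', hq', hlift⟩ := step_lift hlin hs hq
    obtain ⟨γ', hγ'⟩ := hlift γ
    exact ⟨q', hq', γ', hγ.tail hγ'⟩

/-- Every process `q` present after a step of `ℬ` has an ancestor `p` before it: `q` arises from `p`
by a step of the linearization, or it is `p`, untouched by a discrete step (of duration `0`). -/
lemma step_ancestor (hlin : IsLinearization ℬ 𝒜) {α β : Config C X} {s : ℝ≥0}
    (h : Step ℬ α s β) {q : X × Val C} (hq : q ∈ β) :
    ∃ p ∈ α, Step 𝒜 {p} s {q} ∨ (s = 0 ∧ p = q) := by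
  cases h with
  | elapse _ s =>
    obtain ⟨p, hp, rfl⟩ := Multiset.mem_map.1 hq
    refine ⟨p, hp, Or.inl ?_⟩
    have := Step.elapse (B := 𝒜) {p} s
    rwa [shift, Multiset.map_singleton] at this
  | discrete β r μ hr hg =>
    rcases Multiset.mem_add.1 hq with hq | hq
    · exact ⟨q, Multiset.mem_add.2 (Or.inl hq), Or.inr ⟨rfl, rfl⟩⟩
    · obtain ⟨Y, hY, rfl⟩ := Multiset.mem_map.1 hq
      refine ⟨(r.src, μ), by simp, Or.inl ?_⟩
      have := Step.discrete (B := 𝒜) 0 ⟨r.src, r.guard, r.update, {Y}⟩ μ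
        ((hlin.mem_rules_iff _).2 ⟨r, hr, Y, hY, rfl⟩) hg
      simpa using this

lemma run_ancestor (hlin : IsLinearization ℬ 𝒜) {α β : Config C X} {t : ℝ≥0}
    (h : Run ℬ α t β) : ∀ q ∈ β, ∃ p ∈ α, Run 𝒜 {p} t {q} := by
  induction h with
  | refl => exact fun q hq => ⟨q, hq, Run.refl _⟩
  | tail _ hs ih =>
    intro q hq
    obtain ⟨q', hq', hstep | ⟨rfl, rfl⟩⟩ := step_ancestor hlin hs hq
    · obtain ⟨p, hp, hrun⟩ := ih q' hq'
      exact ⟨p, hp, hrun.tail hstep⟩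
    · simpa using ih q' hq'

end

end TBPPcore

open TBPPcore in
/-- runs of the linearization `𝒜` of a TBPP `ℬ` are exactly the
runs of `ℬ` from a single process to a configuration containing the target
process, projected to the main branch. -/
theorem linearization_run_iff_run_with_side_effects
    {C X : Type} [DecidableEq C] (ℬ 𝒜 : TBPP C X) (hlin : IsLinearization ℬ 𝒜)
    (A B : X) (μ ν : Val C) (t : ℝ≥0) :
    Run 𝒜 {(A, μ)} t {(B, ν)} ↔
      ∃ γ : Config C X, Run ℬ {(A, μ)} t ({(B, ν)} + γ) := by
  constructor
  · intro h
    obtain ⟨q, hq, γ, hγ⟩ := run_lift hlin h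
    rw [← hq] at hγ
    exact ⟨γ, hγ⟩
  · rintro ⟨γ, h⟩
    obtain ⟨p, hp, hrun⟩ := run_ancestor hlin h (B, ν) (by simp)
    rwa [Multiset.mem_singleton.1 hp] at hrun
end

section
/- Deleting vanishing rules does not affect coverability: let ℬ be a TBPP and ℬ' the TBPP obtained from ℬ by deleting all rules with empty right-hand side. Then (i) for all configurations α, γ and t ≥ 0, if α →*(t) γ in ℬ, then there exists a configuration γ' ≥ γ (in the multiset ordering) with α →*(t) γ' in ℬ'; and consequently (ii) for all configurations α, β, α ↝cover β in ℬ if and only if α ↝cover β in ℬ'. -/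
/-!
Processes evolve independently apart from the common passage of time, so having more processes
never disables a transition: the step relation is monotone (`TBPPcore.Step.mono`). Applying a
vanishing rule only removes one process, so a run of `ℬ'` can skip that step and stay above the
run of `ℬ`. The larger configuration is carried along the run by induction. Conversely, a run
of `ℬ'` is literally a run of `ℬ`.
-/

open scoped NNReal

namespace TBPPcore

/-- Monotonicity of steps: extra processes are carried along by the same step. -/
theorem Step.mono {C X : Type} [DecidableEq C] {B : TBPP C X} {α β α' : Config C X} {t : ℝ≥0}
    (hs : Step B α t β) (hle : α ≤ α') : ∃ β' : Config C X, β ≤ β' ∧ Step B α' t β' := by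
  cases hs with
  | elapse _ t => exact ⟨shift t α', Multiset.map_le_map hle, .elapse α' t⟩
  | discrete δ r μ hr hg =>
    obtain ⟨ε, rfl⟩ := Multiset.le_iff_exists_add.mp hle
    refine ⟨δ + ε + r.rhs.map (fun Y => (Y, applyUpdates μ r.update)), ?_, ?_⟩
    · rw [add_right_comm]
      exact Multiset.le_add_right _ _
    · rw [add_right_comm]
      exact .discrete (δ + ε) r μ hr hg

theorem Step.of_rules_subset {C X : Type} [DecidableEq C] {B B' : TBPP C X}
    (hsub : B'.rules ⊆ B.rules) {α β : Config C X} {t : ℝ≥0} (hs : Step B' α t β) :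
    Step B α t β := by
  cases hs with
  | elapse _ t => exact .elapse α t
  | discrete δ r μ hr hg => exact .discrete δ r μ (hsub hr) hg

theorem Run.of_rules_subset {C X : Type} [DecidableEq C] {B B' : TBPP C X}
    (hsub : B'.rules ⊆ B.rules) {α β : Config C X} {t : ℝ≥0} (hrun : Run B' α t β) :
    Run B α t β := by
  induction hrun with
  | refl => exact .refl _
  | tail _ hs ih => exact ih.tail (hs.of_rules_subset hsub)

/-- A step either survives the deletion of the vanishing rules, or takes no time and only
removes a process. -/
theorem Step.nonvanishing_or_le {C X : Type} [DecidableEq C] {B B' : TBPP C X}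
    (h : B'.rules = {r | r ∈ B.rules ∧ r.rhs ≠ 0}) {α β : Config C X} {t : ℝ≥0}
    (hs : Step B α t β) : Step B' α t β ∨ (t = 0 ∧ β ≤ α) := by
  cases hs with
  | elapse _ t => exact .inl (.elapse α t)
  | discrete δ r μ hr hg =>
    by_cases h0 : r.rhs = 0
    · exact .inr ⟨rfl, by simp [h0]⟩
    · exact .inl (.discrete δ r μ (by rw [h]; exact ⟨hr, h0⟩) hg)

theorem Run.exists_ge_nonvanishing {C X : Type} [DecidableEq C] {B B' : TBPP C X}
    (h : B'.rules = {r | r ∈ B.rules ∧ r.rhs ≠ 0}) {α γ : Config C X} {t : ℝ≥0}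
    (hrun : Run B α t γ) : ∃ γ' : Config C X, γ ≤ γ' ∧ Run B' α t γ' := by
  induction hrun with
  | refl => exact ⟨_, le_rfl, .refl _⟩
  | tail _ hs ih =>
    obtain ⟨β', hle, hrun'⟩ := ih
    rcases hs.nonvanishing_or_le h with hs' | ⟨rfl, hle'⟩
    · obtain ⟨γ', hγ, hs''⟩ := hs'.mono hle
      exact ⟨γ', hγ, hrun'.tail hs''⟩
    · exact ⟨β', hle'.trans hle, by rwa [add_zero]⟩

end TBPPcore

open TBPPcore in
/-- deleting all vanishing rules (rules with empty right-hand
side) does not affect coverability: (i) every run of `ℬ` can be matched, with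
the same duration, by a run of `ℬ'` reaching a larger configuration; and
(ii) coverability coincides in `ℬ` and `ℬ'`. -/
theorem delete_vanishing_rules_preserves_coverability
    {C X : Type} [DecidableEq C] (ℬ ℬ' : TBPP C X)
    (h : ℬ'.rules = {r | r ∈ ℬ.rules ∧ r.rhs ≠ 0}) :
    (∀ (α γ : Config C X) (t : ℝ≥0), Run ℬ α t γ →
        ∃ γ' : Config C X, γ ≤ γ' ∧ Run ℬ' α t γ') ∧
    (∀ α β : Config C X, Cover ℬ α β ↔ Cover ℬ' α β) := by
  refine ⟨fun α γ t hrun => hrun.exists_ge_nonvanishing h, fun α β => ⟨?_, ?_⟩⟩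
  · rintro ⟨γ, ⟨t, hrun⟩, hle⟩
    obtain ⟨γ', hγ, hrun'⟩ := hrun.exists_ge_nonvanishing h
    exact ⟨γ', ⟨t, hrun'⟩, hle.trans hγ⟩
  · rintro ⟨γ, ⟨t, hrun⟩, hle⟩
    exact ⟨γ, ⟨t, hrun.of_rules_subset (by rw [h]; exact fun _ hr => hr.1)⟩, hle⟩
end

section
/- Subset-sum characterization of one-clock timed automaton reachability: let a₁, …, a_k ∈ ℕ, and let 𝒜 be the one-clock timed automaton with nonterminals X₀, X₁, …, X_k and, for each 1 ≤ i ≤ k, the two rules X_{i−1} →(x = 0) X_i and X_{i−1} →(x = a_i; x := 0) X_i. Then for every t ≥ 0, (X₀, 0) →*(t) (X_k, 0) if and only if t = Σ_{i ∈ S} a_i for some subset S ⊆ {1, …, k}. -/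
/-!
Every reachable configuration of the automaton is a single process `(X_i, u)`. When it is reached at
time `t`, the time spent so far splits as `t = ∑ j ∈ S, a j + u`, where `S` is the set of indices
`j` below `i` at which the resetting rule was taken (`run_invariant`): elapsing increases `u`, the
rule guarded by `x = 0` changes neither side, and the resetting rule moves `u = a i` into the sum.
At `(X_k, 0)` this is a subset sum. Conversely, given `S`, at each `i ∈ S` wait for `a i` time units
and reset, and at each `i ∉ S` take the rule guarded by `x = 0` at once (`run_of_subset`).
-/

open scoped NNReal

namespace TBPPcore

variable {k : ℕ} (a : Fin k → ℕ)

/-- The rule `X_{i-1} →(x = 0) X_i`. -/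
def ssRuleA (i : Fin k) : Rule Unit (Fin (k + 1)) :=
  ⟨i.castSucc, [⟨(), Cmp.eq, 0⟩], [], {i.succ}⟩

/-- The rule `X_{i-1} →(x = aᵢ; x := 0) X_i`. -/
def ssRuleB (i : Fin k) : Rule Unit (Fin (k + 1)) :=
  ⟨i.castSucc, [⟨(), Cmp.eq, a i⟩], [⟨(), Sum.inr 0⟩], {i.succ}⟩

/-- The one-clock timed automaton of the subset-sum reduction. -/
def ssTA : TBPP Unit (Fin (k + 1)) where
  rules := Set.range (ssRuleA (k := k)) ∪ Set.range (ssRuleB a)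
  finite := (Set.finite_range _).union (Set.finite_range _)
  small := by
    rintro r (⟨i, rfl⟩ | ⟨i, rfl⟩) <;> simp [ssRuleA, ssRuleB]

end TBPPcore

namespace TBPPcore

theorem applyUpdates_ssRuleB {k : ℕ} (a : Fin k → ℕ) (j : Fin k) (μ : Val Unit) :
    applyUpdates μ (ssRuleB a j).update = cval 0 := by
  funext x
  simp only [ssRuleB, applyUpdates, applyAssign, List.foldl, cval, Function.update_self]
  -- The natural-number constant `0` is cast through the functor `Sum Unit`.
  exact Nat.cast_zero

/-- A step of the automaton from a one-process configuration either elapses time or applies a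
rule to that process, the untouched part of the configuration being empty. -/
theorem step_singleton_inv {k : ℕ} {a : Fin k → ℕ} {i : Fin (k + 1)} {u s : ℝ≥0}
    {γ : Config Unit (Fin (k + 1))} (h : Step (ssTA a) {(i, cval u)} s γ) :
    γ = {(i, cval (u + s))} ∨
    (∃ j : Fin k, s = 0 ∧ i = j.castSucc ∧ u = 0 ∧ γ = {(j.succ, cval 0)}) ∨
    (∃ j : Fin k, s = 0 ∧ i = j.castSucc ∧ u = a j ∧ γ = {(j.succ, cval 0)}) := by
  generalize hα : ({(i, cval u)} : Config Unit (Fin (k + 1))) = α at h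
  cases h with
  | elapse _ t =>
    subst hα
    left
    simp only [shift, Multiset.map_singleton]
    rfl
  | discrete β r μ hr hg =>
    have hβ : β = 0 := by
      have hc := congrArg Multiset.card hα
      simpa using hc
    subst hβ
    obtain ⟨rfl, rfl⟩ : i = r.src ∧ cval u = μ := by simpa using hα
    right
    rcases hr with ⟨j, rfl⟩ | ⟨j, rfl⟩
    · left
      have hu : u = 0 := by simpa [GuardSat, ssRuleA, Cmp.Sat, cval] using hg
      subst hu
      exact ⟨j, rfl, rfl, rfl, by simp [ssRuleA, applyUpdates]⟩
    · right
      have hu : u = a j := by simpa [GuardSat, ssRuleB, Cmp.Sat, cval] using hg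
      refine ⟨j, rfl, rfl, hu, ?_⟩
      rw [applyUpdates_ssRuleB]
      simp [ssRuleB]

/-- The time elapsed so far is the sum of the `a j` over the resetting rules taken, plus the current
clock value. -/
theorem run_invariant {k : ℕ} {a : Fin k → ℕ} {t : ℝ≥0} {γ : Config Unit (Fin (k + 1))}
    (h : Run (ssTA a) {((0 : Fin (k + 1)), cval 0)} t γ) :
    ∃ (i : Fin (k + 1)) (u : ℝ≥0) (S : Finset (Fin k)), γ = {(i, cval u)} ∧
      (∀ j ∈ S, j.castSucc < i) ∧ t = ∑ j ∈ S, (a j : ℝ≥0) + u := by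
  induction h with
  | refl => exact ⟨0, 0, ∅, rfl, by simp, by simp⟩
  | tail _ hs ih =>
    obtain ⟨i, u, S, rfl, hS, rfl⟩ := ih
    rcases step_singleton_inv hs with rfl | ⟨j, rfl, rfl, rfl, rfl⟩ | ⟨j, rfl, rfl, rfl, rfl⟩
    · exact ⟨i, _, S, rfl, hS, add_assoc _ _ _⟩
    · exact ⟨j.succ, 0, S, rfl, fun l hl => (hS l hl).trans Fin.castSucc_lt_succ, by simp⟩
    · -- All indices in `S` are below `j`, so `a j` has not been counted yet.
      have hj : j ∉ S := fun hj => lt_irrefl _ (hS j hj)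
      refine ⟨j.succ, 0, insert j S, rfl, ?_, ?_⟩
      · intro l hl
        rcases Finset.mem_insert.1 hl with rfl | hl
        · exact Fin.castSucc_lt_succ
        · exact (hS l hl).trans Fin.castSucc_lt_succ
      · rw [Finset.sum_insert hj]
        ring

theorem step_ruleA {k : ℕ} (a : Fin k → ℕ) (i : Fin k) :
    Step (ssTA a) {(i.castSucc, cval 0)} 0 {(i.succ, cval 0)} := by
  have h := Step.discrete (B := ssTA a) 0 (ssRuleA i) (cval 0) (Or.inl ⟨i, rfl⟩)
    (by simp [GuardSat, ssRuleA, Cmp.Sat, cval])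
  simpa [ssRuleA, applyUpdates] using h

theorem step_ruleB {k : ℕ} (a : Fin k → ℕ) (i : Fin k) :
    Step (ssTA a) {(i.castSucc, cval (a i))} 0 {(i.succ, cval 0)} := by
  have h := Step.discrete (B := ssTA a) 0 (ssRuleB a i) (cval (a i)) (Or.inr ⟨i, rfl⟩)
    (by simp [GuardSat, ssRuleB, Cmp.Sat, cval])
  rw [applyUpdates_ssRuleB] at h
  simpa [ssRuleB] using h

/-- Taking the resetting rule exactly at the indices in `S` leads to `X_i` with clock value `0`,
after a time equal to the sum of the `a j` over the `j ∈ S` below `i`. -/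
theorem run_of_subset {k : ℕ} (a : Fin k → ℕ) (S : Finset (Fin k)) (i : Fin (k + 1)) :
    Run (ssTA a) {((0 : Fin (k + 1)), cval 0)}
      (∑ j ∈ S with j.castSucc < i, (a j : ℝ≥0)) {(i, cval 0)} := by
  induction i using Fin.induction with
  | zero => simpa using Run.refl (B := ssTA a) {((0 : Fin (k + 1)), cval 0)}
  | succ i ih =>
    by_cases hi : i ∈ S
    · have hS : S.filter (fun j => j.castSucc < i.succ) =
          insert i (S.filter fun j => j.castSucc < i.castSucc) := by
        ext j
        simp only [Finset.mem_filter, Finset.mem_insert, Fin.lt_def, Fin.ext_iff,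
          Fin.val_castSucc, Fin.val_succ]
        constructor
        · rintro ⟨hj, hlt⟩
          rcases Nat.lt_succ_iff_lt_or_eq.1 hlt with h | h
          · exact Or.inr ⟨hj, h⟩
          · exact Or.inl h
        · rintro (h | ⟨hj, h⟩)
          · obtain rfl := Fin.ext h
            exact ⟨hi, Nat.lt_succ_self _⟩
          · exact ⟨hj, h.trans (Nat.lt_succ_self _)⟩
      have hwait : Step (ssTA a) {(i.castSucc, cval 0)} (a i) {(i.castSucc, cval (a i))} := by
        have h := Step.elapse (B := ssTA a) {(i.castSucc, cval 0)} (a i)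
        simp only [shift, Multiset.map_singleton, cval, zero_add] at h
        exact h
      have h := (ih.tail hwait).tail (step_ruleB a i)
      rw [hS, Finset.sum_insert (by simp), add_comm (a i : ℝ≥0)]
      rwa [add_zero] at h
    · have hS : S.filter (fun j => j.castSucc < i.succ) =
          S.filter fun j => j.castSucc < i.castSucc := by
        refine Finset.filter_congr fun j hj => ?_
        have hne : j.val ≠ i.val := fun h => hi (Fin.ext h ▸ hj)
        simp only [Fin.lt_def, Fin.val_castSucc, Fin.val_succ]
        omega
      have h := ih.tail (step_ruleA a i)
      rwa [add_zero, ← hS] at h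

end TBPPcore

open TBPPcore in
/-- subset-sum characterization of one-clock timed automaton
reachability: `(X₀,0) →*(t) (X_k,0)` in the automaton with rules
`X_{i−1} →(x=0) X_i` and `X_{i−1} →(x=aᵢ; x:=0) X_i` iff `t` is the sum of a
subset of `{a₁, …, a_k}`. -/
theorem subset_sum_one_clock_TA_reachability
    (k : ℕ) (a : Fin k → ℕ) (t : ℝ≥0) :
    Run (ssTA a) {((0 : Fin (k + 1)), cval 0)} t {(Fin.last k, cval 0)} ↔
      ∃ S : Finset (Fin k), t = ∑ i ∈ S, (a i : ℝ≥0) := by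
  constructor
  · intro h
    obtain ⟨i, u, S, hγ, -, rfl⟩ := run_invariant h
    obtain ⟨-, hu⟩ : Fin.last k = i ∧ cval 0 = cval u := by simpa using hγ
    have hu : 0 = u := congrFun hu ()
    exact ⟨S, by rw [← hu, add_zero]⟩
  · rintro ⟨S, rfl⟩
    have h := run_of_subset a S (Fin.last k)
    rwa [Finset.filter_true_of_mem fun j _ => Fin.castSucc_lt_last j] at h
end

section
/- Subset-sum characterization of one-clock TBPP coverability: let a₁, …, a_k ∈ ℕ and t ∈ ℕ, and let ℬ be the one-clock TBPP with nonterminals S, X₀, X₁, …, X_k, Y and rules: S →(x = 0) X₀ ⊎ Y, and for each 1 ≤ i ≤ k the two rules X_{i−1} →(x = 0) X_i and X_{i−1} →(x = a_i; x := 0) X_i (Y has no rules). Then {(S,0)} ↝cover {(X_k, 0), (Y, t)} if and only if t = Σ_{i ∈ S'} a_i for some subset S' ⊆ {1, …, k}. -/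
/-!
Once the start rule has fired (necessarily at clock value `0`), every configuration consists of a
single process `X i` with clock `u` and the inert process `Y` with clock `v`. The clock of `Y`
records the time elapsed since then, the clock of `X i` the time since its last reset (if any), and
each reset happens when the clock of `X i` reads exactly `a j`. Hence `v = Σ_{j ∈ S'} a j + u`,
where `S'` is the set of the indices at which a resetting rule was taken (`Inv`, `Inv.step`). A
covering configuration has `i = k` and `u = 0`, so `t = v` is a subset sum. Conversely, for a given
`S'`, waiting `a j` and resetting for `j ∈ S'`, and moving on immediately for `j ∉ S'`, realises
the sum (`reach_X`).
-/

open scoped NNReal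

namespace TBPPcore

/-- Nonterminals of the subset-sum coverability reduction:
`S`, `X₀, …, X_k`, and `Y`. -/
inductive SSNT (k : ℕ) : Type
  | start : SSNT k
  | X : Fin (k + 1) → SSNT k
  | Y : SSNT k

variable {k : ℕ} (a : Fin k → ℕ)

/-- The initial branching rule `S →(x = 0) X₀ ⊎ Y`. -/
def ssbStart : Rule Unit (SSNT k) :=
  ⟨SSNT.start, [⟨(), Cmp.eq, 0⟩], [], {SSNT.X 0, SSNT.Y}⟩

/-- The rule `X_{i-1} →(x = 0) X_i`. -/
def ssbRuleA (i : Fin k) : Rule Unit (SSNT k) :=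
  ⟨SSNT.X i.castSucc, [⟨(), Cmp.eq, 0⟩], [], {SSNT.X i.succ}⟩

/-- The rule `X_{i-1} →(x = aᵢ; x := 0) X_i`. -/
def ssbRuleB (i : Fin k) : Rule Unit (SSNT k) :=
  ⟨SSNT.X i.castSucc, [⟨(), Cmp.eq, a i⟩], [⟨(), Sum.inr 0⟩], {SSNT.X i.succ}⟩

/-- The one-clock TBPP of the subset-sum coverability reduction. -/
def ssTBPP : TBPP Unit (SSNT k) where
  rules := {ssbStart} ∪ Set.range (ssbRuleA (k := k)) ∪ Set.range (ssbRuleB a)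
  finite := (((Set.finite_singleton _).union (Set.finite_range _)).union
    (Set.finite_range _))
  small := by
    rintro r ((rfl | ⟨i, rfl⟩) | ⟨i, rfl⟩) <;>
      simp [ssbStart, ssbRuleA, ssbRuleB]

end TBPPcore

namespace TBPPcore

/-- The configuration `{(X i, u), (Y, v)}`. -/
def pairConfig {k : ℕ} (i : Fin (k + 1)) (u v : ℝ≥0) : Config Unit (SSNT k) :=
  {(SSNT.X i, cval u), (SSNT.Y, cval v)}

/-- The invariant of all configurations reachable from `{(S, 0)}`: either `S` is still waiting, or
the clock of `Y` exceeds that of `X i` by a sum of distinct `a j` with `j` before `i`. -/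
inductive Inv {k : ℕ} (a : Fin k → ℕ) : Config Unit (SSNT k) → Prop
  | start (s : ℝ≥0) : Inv a {(SSNT.start, cval s)}
  | pair (i : Fin (k + 1)) (u : ℝ≥0) (T : Finset (Fin k)) (hT : ∀ j ∈ T, j.castSucc < i) :
      Inv a (pairConfig i u (((∑ j ∈ T, a j : ℕ) : ℝ≥0) + u))

lemma val_eq_cval (μ : Val Unit) : μ = cval (μ ()) := rfl

lemma cval_inj {u v : ℝ≥0} : cval u = cval v ↔ u = v :=
  ⟨fun h => congrFun h (), fun h => h ▸ rfl⟩

lemma shift_pairConfig {k : ℕ} (i : Fin (k + 1)) (u v s : ℝ≥0) :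
    shift s (pairConfig i u v) = pairConfig i (u + s) (v + s) := by
  simp [shift, pairConfig, cval]
  rfl

lemma guardSat_eq (μ : Val Unit) (n : ℕ) :
    GuardSat μ [⟨(), Cmp.eq, n⟩] ↔ μ () = n := by
  simp [GuardSat, Cmp.Sat]

lemma applyUpdates_reset (μ : Val Unit) :
    applyUpdates μ [⟨(), Sum.inr 0⟩] = cval 0 := by
  funext c
  -- The constant `0` enters `applyAssign` through the cast `Unit ⊕ ℕ → Unit ⊕ ℝ≥0`.
  change ((0 : ℕ) : ℝ≥0) = 0
  exact Nat.cast_zero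

/-- As `Y` has no rules, a discrete step out of `{(X i, u), (Y, v)}` must consume `X i`. -/
lemma add_singleton_eq_pairConfig {k : ℕ} {i j : Fin (k + 1)} {u v : ℝ≥0} {μ : Val Unit}
    {β : Config Unit (SSNT k)} (h : β + {(SSNT.X j, μ)} = pairConfig i u v) :
    j = i ∧ μ () = u ∧ β = {(SSNT.Y, cval v)} := by
  have hm : (SSNT.X j, μ) ∈ pairConfig i u v := by rw [← h]; simp
  have hm' : j = i ∧ μ = cval u := by simpa [pairConfig] using hm
  obtain ⟨rfl, rfl⟩ := hm'
  refine ⟨rfl, rfl, ?_⟩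
  rw [pairConfig, Multiset.insert_eq_cons, ← Multiset.singleton_add, add_comm] at h
  exact add_left_cancel h

/-- Taking a resetting rule extends the set of used indices by the current one. -/
lemma Inv.insert {k : ℕ} {a : Fin k → ℕ} (i : Fin k) (T : Finset (Fin k))
    (hT : ∀ j ∈ T, j.castSucc < i.castSucc) :
    Inv a (pairConfig i.succ 0 (((∑ j ∈ T, a j : ℕ) : ℝ≥0) + a i)) := by
  have hi : i ∉ T := fun h => lt_irrefl _ (hT i h)
  have := Inv.pair (a := a) i.succ 0 (Insert.insert i T) (by
    intro j hj
    rcases Finset.mem_insert.1 hj with rfl | hj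
    · exact Fin.castSucc_lt_succ
    · exact (hT j hj).trans Fin.castSucc_lt_succ)
  rw [Finset.sum_insert hi] at this
  simpa [add_comm] using this

lemma Inv.step {k : ℕ} {a : Fin k → ℕ} {α γ : Config Unit (SSNT k)} {s : ℝ≥0}
    (hα : Inv a α) (h : Step (ssTBPP a) α s γ) : Inv a γ := by
  cases h with
  | elapse =>
    cases hα with
    | start r => exact Inv.start (r + s)
    | pair i u T hT =>
      rw [shift_pairConfig, add_assoc]
      exact Inv.pair i (u + s) T hT
  | discrete β r μ hr hg =>
    generalize hδ : β + {(r.src, μ)} = δ at hα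
    rcases hr with (rfl | ⟨i, rfl⟩) | ⟨i, rfl⟩
    · have hμ : μ () = 0 := by simpa using (guardSat_eq μ 0).1 hg
      have hμ' : μ = cval 0 := by rw [val_eq_cval μ, hμ]
      have hm : (SSNT.start, μ) ∈ δ := by rw [← hδ]; simp [ssbStart]
      cases hα with
      | start r =>
        have hβ : β = 0 := by
          have := congrArg Multiset.card hδ
          simpa using this
        have := Inv.pair (a := a) 0 0 ∅ (by simp)
        simpa [hβ, hμ', ssbStart, pairConfig, applyUpdates] using this
      | pair i u T hT => simp [pairConfig] at hm
    · have hμ : μ () = 0 := by simpa using (guardSat_eq μ 0).1 hg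
      cases hα with
      | start r =>
        have hm : ((ssbRuleA i).src, μ) ∈ ({(SSNT.start, cval r)} : Config Unit (SSNT k)) := by
          rw [← hδ]; simp
        simp [ssbRuleA] at hm
      | pair i' u T hT =>
        obtain ⟨rfl, hu, rfl⟩ := add_singleton_eq_pairConfig hδ
        have hu0 : u = 0 := hu.symm.trans hμ
        have hμ' : μ = cval 0 := by rw [val_eq_cval μ, hμ]
        have := Inv.pair (a := a) i.succ 0 T
          (fun j hj => (hT j hj).trans Fin.castSucc_lt_succ)
        rw [pairConfig, Multiset.insert_eq_cons, ← Multiset.singleton_add, add_comm] at this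
        simpa [ssbRuleA, applyUpdates, hμ', hu0] using this
    · have hμ : μ () = a i := (guardSat_eq μ (a i)).1 hg
      cases hα with
      | start r =>
        have hm : ((ssbRuleB a i).src, μ) ∈ ({(SSNT.start, cval r)} : Config Unit (SSNT k)) := by
          rw [← hδ]; simp
        simp [ssbRuleB] at hm
      | pair i' u T hT =>
        obtain ⟨rfl, hu, rfl⟩ := add_singleton_eq_pairConfig hδ
        have hua : u = a i := hu.symm.trans hμ
        have := Inv.insert (a := a) i T hT
        rw [pairConfig, Multiset.insert_eq_cons, ← Multiset.singleton_add, add_comm] at this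
        simpa [ssbRuleB, applyUpdates_reset, hua] using this

lemma Inv.run {k : ℕ} {a : Fin k → ℕ} {α γ : Config Unit (SSNT k)} {s : ℝ≥0}
    (h : Run (ssTBPP a) α s γ) (hα : Inv a α) : Inv a γ := by
  induction h with
  | refl => exact hα
  | tail _ hs ih => exact ih.step hs

lemma Reach.tail {C X : Type} [DecidableEq C] {B : TBPP C X} {α β γ : Config C X} {s : ℝ≥0}
    (h : Reach B α β) (hs : Step B β s γ) : Reach B α γ :=
  let ⟨_, ht⟩ := h
  ⟨_, ht.tail hs⟩

lemma step_start {k : ℕ} (a : Fin k → ℕ) :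
    Step (ssTBPP a) {(SSNT.start, cval 0)} 0 (pairConfig 0 0 0) := by
  have := Step.discrete (B := ssTBPP a) 0 ssbStart (cval 0) (Or.inl (Or.inl rfl))
    ((guardSat_eq _ 0).2 (by simp [cval]))
  simpa [ssbStart, applyUpdates, pairConfig] using this

lemma step_skip {k : ℕ} (a : Fin k → ℕ) (i : Fin k) (v : ℝ≥0) :
    Step (ssTBPP a) (pairConfig i.castSucc 0 v) 0 (pairConfig i.succ 0 v) := by
  have := Step.discrete (B := ssTBPP a) {(SSNT.Y, cval v)} (ssbRuleA i) (cval 0)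
    (Or.inl (Or.inr ⟨i, rfl⟩)) ((guardSat_eq _ 0).2 (by simp [cval]))
  simpa [ssbRuleA, applyUpdates, pairConfig, Multiset.insert_eq_cons, ← Multiset.singleton_add,
    add_comm] using this

lemma step_reset {k : ℕ} (a : Fin k → ℕ) (i : Fin k) (v : ℝ≥0) :
    Step (ssTBPP a) (pairConfig i.castSucc (a i) v) 0 (pairConfig i.succ 0 v) := by
  have := Step.discrete (B := ssTBPP a) {(SSNT.Y, cval v)} (ssbRuleB a i) (cval (a i))
    (Or.inr ⟨i, rfl⟩) ((guardSat_eq _ _).2 (by simp [cval]))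
  simpa [ssbRuleB, applyUpdates_reset, pairConfig, Multiset.insert_eq_cons,
    ← Multiset.singleton_add, add_comm] using this

/-- `X i` can be reached with clock `0` at the time given by the members of `T` before `i`. -/
lemma reach_X {k : ℕ} (a : Fin k → ℕ) (T : Finset (Fin k)) (i : Fin (k + 1)) :
    Reach (ssTBPP a) {(SSNT.start, cval 0)}
      (pairConfig i 0 ((∑ j ∈ T with j.castSucc < i, a j : ℕ) : ℝ≥0)) := by
  induction i using Fin.induction with
  | zero => simpa using Reach.tail ⟨0, Run.refl _⟩ (step_start a)
  | succ i ih =>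
    by_cases hi : i ∈ T
    · have hset : (T.filter fun j => j.castSucc < i.succ) =
          Insert.insert i (T.filter fun j => j.castSucc < i.castSucc) := by
        ext j
        simp only [Finset.mem_filter, Finset.mem_insert, Fin.castSucc_lt_succ_iff,
          Fin.castSucc_lt_castSucc_iff, le_iff_lt_or_eq]
        constructor
        · tauto
        · rintro (rfl | h) <;> tauto
      have h1 := ih.tail (Step.elapse _ (a i : ℝ≥0))
      rw [shift_pairConfig, zero_add] at h1
      rw [hset, Finset.sum_insert (by simp), Nat.cast_add, add_comm]
      exact h1.tail (step_reset a i _)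
    · have hset : (T.filter fun j => j.castSucc < i.succ) =
          T.filter fun j => j.castSucc < i.castSucc := by
        refine Finset.filter_congr fun j hj => ?_
        have : j ≠ i := fun h => hi (h ▸ hj)
        simp [Fin.castSucc_lt_succ_iff, le_iff_lt_or_eq, this]
      rw [hset]
      exact ih.tail (step_skip a i _)

end TBPPcore

open TBPPcore in
/-- subset-sum characterization of one-clock TBPP coverability:
`{(S,0)} ↝cover {(X_k,0), (Y,t)}` iff `t` is the sum of a subset of
`{a₁, …, a_k}`. -/
theorem subset_sum_one_clock_TBPP_coverability
    (k : ℕ) (a : Fin k → ℕ) (t : ℕ) :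
    Cover (ssTBPP a) {(SSNT.start, cval 0)}
        {(SSNT.X (Fin.last k), cval 0), (SSNT.Y, cval t)} ↔
      ∃ S' : Finset (Fin k), t = ∑ i ∈ S', a i := by
  constructor
  · rintro ⟨γ, ⟨s, hrun⟩, hle⟩
    have hX := Multiset.mem_of_le hle (Multiset.mem_cons_self _ _)
    have hY := Multiset.mem_of_le hle
      (Multiset.mem_cons_of_mem (Multiset.mem_singleton_self _))
    cases Inv.run hrun (Inv.start 0) with
    | start r => simp at hX
    | pair i u T hT =>
      have hu : Fin.last k = i ∧ 0 = u := by simpa [pairConfig, cval_inj] using hX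
      have hv : (t : ℝ≥0) = ((∑ j ∈ T, a j : ℕ) : ℝ≥0) + u := by
        simpa [pairConfig, cval_inj] using hY
      rw [← hu.2, add_zero] at hv
      exact ⟨T, Nat.cast_injective hv⟩
  · rintro ⟨T, rfl⟩
    refine ⟨_, reach_X a T (Fin.last k), ?_⟩
    simp [pairConfig, Fin.castSucc_lt_last]
end
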